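/- arXiv:2403.13697 — 13 statements merged into one kernel-verified Lean document; each statement's English description precedes it below -/
import Mathlib

section
/- Let A be a (not necessarily associative) algebra over a field F which decomposes as a direct sum of vector subspaces A = A₁ ⊕ A₂, where A₁ and A₂ are subalgebras of A. Let μ ∈ Cent(A) be a centrum map such that μ(xy) ∈ A₁ for all x,y ∈ A₁ and μ(ab) ∈ A₂ for all a,b ∈ A₂. Then the linear map R : A → A defined by R(x + a) = −μ(x) for all x ∈ A₁ and a ∈ A₂ is a Rota–Baxter operator of weight μ. -/
/-- `μ` is a centrum map of the (not necessarily associative) algebra `(A, mul)`: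
`μ(xy) = μ(x)y = xμ(y)` for all `x, y`. -/
def IsCentrumMap {F A : Type*} [Field F] [AddCommGroup A] [Module F A]
    (mul : A →ₗ[F] A →ₗ[F] A) (μ : A →ₗ[F] A) : Prop :=
  ∀ x y : A, μ (mul x y) = mul (μ x) y ∧ μ (mul x y) = mul x (μ y)

/-- `R` is a Rota–Baxter operator of weight `μ` on `(A, mul)`. -/
def IsRotaBaxterOp {F A : Type*} [Field F] [AddCommGroup A] [Module F A]
    (mul : A →ₗ[F] A →ₗ[F] A) (μ R : A →ₗ[F] A) : Prop :=
  ∀ x y : A, mul (R x) (R y) = R (mul (R x) y + mul x (R y) + μ (mul x y))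

/-!
A centrum map moves freely between the factors of a product, so for `u = x + a` and `v = y + b`
with `x, y ∈ A₁` and `a, b ∈ A₂` the terms `μ(xb)` and `μ(ay)` cancel
in `R(u)v + uR(v) + μ(uv)`, leaving `-μ(xy) + μ(ab)`. This is again split along `A₁` and `A₂`, and
`R` sends it to `μ(μ(xy)) = μ(x)μ(y) = R(u)R(v)`.
-/

namespace IsCentrumMap

variable {F A : Type*} [Field F] [AddCommGroup A] [Module F A]
  {mul : A →ₗ[F] A →ₗ[F] A} {μ : A →ₗ[F] A}

theorem mul_map_left (hμ : IsCentrumMap mul μ) (x y : A) : mul (μ x) y = μ (mul x y) :=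
  (hμ x y).1.symm

theorem mul_map_right (hμ : IsCentrumMap mul μ) (x y : A) : mul x (μ y) = μ (mul x y) :=
  (hμ x y).2.symm

theorem mul_map_map (hμ : IsCentrumMap mul μ) (x y : A) :
    mul (μ x) (μ y) = μ (μ (mul x y)) := by
  rw [hμ.mul_map_left, hμ.mul_map_right]

theorem mul_neg_left_add_mul_neg_right_add_map_mul (hμ : IsCentrumMap mul μ) (x a y b : A) :
    mul (-μ x) (y + b) + mul (x + a) (-μ y) + μ (mul (x + a) (y + b)) =
      -μ (mul x y) + μ (mul a b) := by
  simp only [map_neg, map_add, LinearMap.neg_apply, LinearMap.add_apply, hμ.mul_map_left,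
    hμ.mul_map_right]
  abel

end IsCentrumMap

theorem statement0_general {F A : Type*} [Field F] [AddCommGroup A] [Module F A]
    {mul : A →ₗ[F] A →ₗ[F] A} {A₁ A₂ : Submodule F A} (hA : Codisjoint A₁ A₂)
    {μ : A →ₗ[F] A} (hμ : IsCentrumMap mul μ)
    (hμ₁ : ∀ x ∈ A₁, ∀ y ∈ A₁, μ (mul x y) ∈ A₁)
    (hμ₂ : ∀ a ∈ A₂, ∀ b ∈ A₂, μ (mul a b) ∈ A₂)
    {R : A →ₗ[F] A} (hR : ∀ x ∈ A₁, ∀ a ∈ A₂, R (x + a) = -μ x) :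
    IsRotaBaxterOp mul μ R := by
  intro u v
  obtain ⟨x, a, hx, ha, rfl⟩ := Submodule.codisjoint_iff_exists_add_eq.mp hA u
  obtain ⟨y, b, hy, hb, rfl⟩ := Submodule.codisjoint_iff_exists_add_eq.mp hA v
  have hxy : -μ (mul x y) ∈ A₁ := neg_mem (hμ₁ x hx y hy)
  have hab : μ (mul a b) ∈ A₂ := hμ₂ a ha b hb
  calc mul (R (x + a)) (R (y + b))
      = mul (-μ x) (-μ y) := by rw [hR x hx a ha, hR y hy b hb]
    _ = μ (μ (mul x y)) := by
      rw [map_neg, map_neg, LinearMap.neg_apply, neg_neg, hμ.mul_map_map]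
    _ = R (-μ (mul x y) + μ (mul a b)) := by rw [hR _ hxy _ hab, map_neg, neg_neg]
    _ = R (mul (R (x + a)) (y + b) + mul (x + a) (R (y + b)) + μ (mul (x + a) (y + b))) := by
      rw [hR x hx a ha, hR y hy b hb, hμ.mul_neg_left_add_mul_neg_right_add_map_mul]

/-- if `A = A₁ ⊕ A₂` with `A₁, A₂` subalgebras, `μ` a centrum map with
`μ(A₁·A₁) ⊆ A₁` and `μ(A₂·A₂) ⊆ A₂`, then `R(x + a) = -μ(x)` (for `x ∈ A₁`, `a ∈ A₂`)
is a Rota–Baxter operator of weight `μ`. -/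
theorem statement0 {F A : Type*} [Field F] [AddCommGroup A] [Module F A]
    (mul : A →ₗ[F] A →ₗ[F] A)
    (A₁ A₂ : Submodule F A) (hcompl : IsCompl A₁ A₂)
    (hA₁ : ∀ x ∈ A₁, ∀ y ∈ A₁, mul x y ∈ A₁)
    (hA₂ : ∀ x ∈ A₂, ∀ y ∈ A₂, mul x y ∈ A₂)
    (μ : A →ₗ[F] A) (hμ : IsCentrumMap mul μ)
    (hμ₁ : ∀ x ∈ A₁, ∀ y ∈ A₁, μ (mul x y) ∈ A₁)
    (hμ₂ : ∀ x ∈ A₂, ∀ y ∈ A₂, μ (mul x y) ∈ A₂)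
    (R : A →ₗ[F] A)
    (hR : ∀ x ∈ A₁, ∀ a ∈ A₂, R (x + a) = -μ x) :
    IsRotaBaxterOp mul μ R := by
  exact statement0_general hcompl.codisjoint hμ hμ₁ hμ₂ hR
end

section
/- Let A be a (not necessarily associative) algebra over a field F, let R : A → A be a Rota–Baxter operator of weight μ ∈ Cent(A), and let γ ∈ Cent(A). Then μ∘γ is again a centrum map of A, and the composition R∘γ is a Rota–Baxter operator of weight μ∘γ. -/
section

variable {F A : Type*} [Field F] [AddCommGroup A] [Module F A]
  {mul : A →ₗ[F] A →ₗ[F] A} {μ γ R : A →ₗ[F] A}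

namespace IsCentrumMap

theorem apply_apply_mul (hμ : IsCentrumMap mul μ) (hγ : IsCentrumMap mul γ) (x y : A) :
    μ (γ (mul x y)) = mul (μ x) (γ y) := by
  rw [(hγ x y).2, (hμ x (γ y)).1]

/-- Centrum maps need not commute on all of `A`: if the multiplication is zero, then every linear
map is a centrum map. -/
theorem apply_apply_mul_comm (hμ : IsCentrumMap mul μ) (hγ : IsCentrumMap mul γ) (x y : A) :
    γ (μ (mul x y)) = μ (γ (mul x y)) := by
  rw [hγ.apply_apply_mul hμ, ← (hμ (γ x) y).2, ← (hγ x y).1]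

theorem comp (hμ : IsCentrumMap mul μ) (hγ : IsCentrumMap mul γ) :
    IsCentrumMap mul (μ ∘ₗ γ) := fun x y ↦ by
  simp only [LinearMap.comp_apply]
  exact ⟨by rw [(hγ x y).1, (hμ (γ x) y).1], by rw [(hγ x y).2, (hμ x (γ y)).2]⟩

end IsCentrumMap

theorem IsRotaBaxterOp.comp_isCentrumMap (hR : IsRotaBaxterOp mul μ R) (hγ : IsCentrumMap mul γ)
    (hcomm : ∀ x y, γ (μ (mul x y)) = μ (γ (mul x y))) :
    IsRotaBaxterOp mul (μ ∘ₗ γ) (R ∘ₗ γ) := fun x y ↦ by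
  have weight_term : μ (mul (γ x) (γ y)) = γ (μ (γ (mul x y))) := by
    rw [← (hγ (γ x) y).2, ← hcomm, ← (hγ x y).1]
  simp only [LinearMap.comp_apply]
  calc mul (R (γ x)) (R (γ y))
      = R (mul (R (γ x)) (γ y) + mul (γ x) (R (γ y)) + μ (mul (γ x) (γ y))) := hR (γ x) (γ y)
    _ = R (γ (mul (R (γ x)) y) + γ (mul x (R (γ y))) + γ (μ (γ (mul x y)))) := by
      rw [weight_term, (hγ (R (γ x)) y).2, (hγ x (R (γ y))).1]
    _ = R (γ (mul (R (γ x)) y + mul x (R (γ y)) + μ (γ (mul x y)))) := by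
      simp only [map_add]

end

/-- if `R` is a Rota–Baxter operator of weight `μ ∈ Cent(A)` and
`γ ∈ Cent(A)`, then `μ∘γ` is a centrum map and `R∘γ` is a Rota–Baxter operator of
weight `μ∘γ`. -/
theorem statement1 {F A : Type*} [Field F] [AddCommGroup A] [Module F A]
    (mul : A →ₗ[F] A →ₗ[F] A) (μ γ R : A →ₗ[F] A)
    (hμ : IsCentrumMap mul μ) (hγ : IsCentrumMap mul γ)
    (hR : IsRotaBaxterOp mul μ R) :
    IsCentrumMap mul (μ ∘ₗ γ) ∧ IsRotaBaxterOp mul (μ ∘ₗ γ) (R ∘ₗ γ) :=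
  ⟨hμ.comp hγ, hR.comp_isCentrumMap hγ (hμ.apply_apply_mul_comm hγ)⟩
end

section
/- Let g be a Lie algebra over a field F of characteristic different from 2 and let R : g → g be a Rota–Baxter operator of weight μ ∈ Cent(g). Then the new product x ∘ y = [R(x),y] + [x,R(y)] + μ([x,y]) defines a Lie algebra structure on the underlying vector space of g, i.e. ∘ is bilinear, alternating (x ∘ x = 0), and satisfies the Jacobi identity. (This is the Lie-algebra instance of the paper's Corollary 2, which asserts that (A, ·_R) lies in the variety generated by A.) -/
/-!
A centrum map of `L` is an endomorphism `μ : L →ₗ⁅K,L⁆ L` of the adjoint module.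
Adjoin to `L` a formal variable `t` with `t² = μ t`, so that
`⁅x + t a, y + t b⁆ = ⁅x, y⁆ + t (⁅x, b⁆ + ⁅a, y⁆ + μ ⁅a, b⁆)`. The Rota–Baxter identity says that
the graph `{R x + t x}` is closed under this bracket, and `x ∘ y` is the `t`-coordinate of the
bracket of `R x + t x` and `R y + t y`. Accordingly the Jacobi sum of `∘` splits into the seven
Jacobi sums of `L` in which `R` is applied to a proper subset of the three arguments, weighted by
`1`, `μ` or `μ²`; each of them vanishes.
-/

section RotaBaxter

variable {K L : Type*} [CommRing K] [LieRing L] [LieAlgebra K L]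

/-- The product `x ∘ y = ⁅R x, y⁆ + ⁅x, R y⁆ + μ ⁅x, y⁆` attached to a Rota–Baxter operator `R` of
weight `μ`, as a bilinear map. -/
def rotaBaxterLie (μ R : L →ₗ[K] L) : L →ₗ[K] L →ₗ[K] L :=
  let ad : L →ₗ[K] L →ₗ[K] L := LieAlgebra.ad K L
  ad ∘ₗ R + ad.compl₂ R + ad.compr₂ μ

theorem rotaBaxterLie_apply (μ R : L →ₗ[K] L) (x y : L) :
    rotaBaxterLie μ R x y = ⁅R x, y⁆ + ⁅x, R y⁆ + μ ⁅x, y⁆ :=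
  rfl

/-- `R` is a Rota–Baxter operator of weight `μ`. -/
def IsRotaBaxter (μ R : L →ₗ[K] L) : Prop :=
  ∀ x y : L, ⁅R x, R y⁆ = R (rotaBaxterLie μ R x y)

theorem isAlt_rotaBaxterLie (μ R : L →ₗ[K] L) : (rotaBaxterLie μ R).IsAlt := fun x => by
  rw [rotaBaxterLie_apply, ← lie_skew x (R x), add_neg_cancel, lie_self, map_zero, add_zero]

theorem lie_jacobi_left (x y z : L) : ⁅⁅x, y⁆, z⁆ + ⁅⁅y, z⁆, x⁆ + ⁅⁅z, x⁆, y⁆ = 0 := by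
  rw [← lie_skew ⁅x, y⁆ z, ← lie_skew ⁅y, z⁆ x, ← lie_skew ⁅z, x⁆ y, ← neg_add, ← neg_add,
    lie_jacobi, neg_zero]

theorem map_lie_left (μ : L →ₗ⁅K,L⁆ L) (x y : L) : μ ⁅x, y⁆ = ⁅μ x, y⁆ := by
  rw [← lie_skew, map_neg, LieModuleHom.map_lie, lie_skew]

theorem IsRotaBaxter.rotaBaxterLie_rotaBaxterLie {μ : L →ₗ⁅K,L⁆ L} {R : L →ₗ[K] L}
    (hR : IsRotaBaxter (μ : L →ₗ[K] L) R) (x y z : L) :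
    rotaBaxterLie (μ : L →ₗ[K] L) R (rotaBaxterLie (μ : L →ₗ[K] L) R x y) z =
      (⁅⁅R x, R y⁆, z⁆ + ⁅⁅R x, y⁆, R z⁆ + ⁅⁅x, R y⁆, R z⁆)
        + μ (⁅⁅x, y⁆, R z⁆ + ⁅⁅x, R y⁆, z⁆ + ⁅⁅R x, y⁆, z⁆)
        + μ (μ ⁅⁅x, y⁆, z⁆) := by
  rw [rotaBaxterLie_apply, ← hR]
  simp only [rotaBaxterLie_apply, LieModuleHom.coe_toLinearMap, add_lie, map_add, ← map_lie_left]
  abel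

theorem IsRotaBaxter.rotaBaxterLie_jacobi {μ : L →ₗ⁅K,L⁆ L} {R : L →ₗ[K] L}
    (hR : IsRotaBaxter (μ : L →ₗ[K] L) R) (x y z : L) :
    let b := rotaBaxterLie (μ : L →ₗ[K] L) R
    b (b x y) z + b (b y z) x + b (b z x) y = 0 := by
  intro b
  let J (u v w : L) : L := ⁅⁅u, v⁆, w⁆ + ⁅⁅v, w⁆, u⁆ + ⁅⁅w, u⁆, v⁆
  have hJ (u v w : L) : J u v w = 0 := lie_jacobi_left u v w
  calc b (b x y) z + b (b y z) x + b (b z x) y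
      = (J (R x) (R y) z + J (R x) y (R z) + J x (R y) (R z))
          + μ (J x y (R z) + J x (R y) z + J (R x) y z)
          + μ (μ (J x y z)) := by
        simp only [b, J, hR.rotaBaxterLie_rotaBaxterLie, map_add]
        abel
    _ = 0 := by simp only [hJ, map_zero, add_zero]

end RotaBaxter

theorem statement5_general {K L : Type*} [CommRing K] [LieRing L] [LieAlgebra K L]
    (μ : L →ₗ⁅K,L⁆ L) (R : L →ₗ[K] L) (hR : IsRotaBaxter (μ : L →ₗ[K] L) R) :
    let b : L → L → L := fun x y => ⁅R x, y⁆ + ⁅x, R y⁆ + μ ⁅x, y⁆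
    (∀ x x' y : L, b (x + x') y = b x y + b x' y) ∧
    (∀ (c : K) (x y : L), b (c • x) y = c • b x y) ∧
    (∀ x y y' : L, b x (y + y') = b x y + b x y') ∧
    (∀ (c : K) (x y : L), b x (c • y) = c • b x y) ∧
    (∀ x : L, b x x = 0) ∧
    (∀ x y z : L, b (b x y) z + b (b y z) x + b (b z x) y = 0) :=
  let B := rotaBaxterLie (μ : L →ₗ[K] L) R
  ⟨B.map_add₂, B.map_smul₂, fun x => map_add (B x), fun c x => map_smul (B x) c,
    isAlt_rotaBaxterLie (μ : L →ₗ[K] L) R, hR.rotaBaxterLie_jacobi⟩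


/-- if `R` is a Rota–Baxter operator of weight `μ ∈ Cent(g)` on a Lie
algebra `g` over a field of characteristic ≠ 2, then
`x ∘ y = [R x, y] + [x, R y] + μ [x,y]` is a Lie algebra product on `g`:
it is bilinear, alternating and satisfies the Jacobi identity. -/
theorem statement5 {F L : Type*} [Field F] [LieRing L] [LieAlgebra F L]
    (h2 : (2 : F) ≠ 0)
    (μ R : L →ₗ[F] L)
    (hμ : ∀ x y : L, μ ⁅x, y⁆ = ⁅μ x, y⁆ ∧ μ ⁅x, y⁆ = ⁅x, μ y⁆)
    (hR : ∀ x y : L, ⁅R x, R y⁆ = R (⁅R x, y⁆ + ⁅x, R y⁆ + μ ⁅x, y⁆)) :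
    let b : L → L → L := fun x y => ⁅R x, y⁆ + ⁅x, R y⁆ + μ ⁅x, y⁆
    (∀ x x' y : L, b (x + x') y = b x y + b x' y) ∧
    (∀ (c : F) (x y : L), b (c • x) y = c • b x y) ∧
    (∀ x y y' : L, b x (y + y') = b x y + b x y') ∧
    (∀ (c : F) (x y : L), b x (c • y) = c • b x y) ∧
    (∀ x : L, b x x = 0) ∧
    (∀ x y z : L, b (b x y) z + b (b y z) x + b (b z x) y = 0) :=
  statement5_general { μ with map_lie' := (hμ _ _).2 } R hR
end

section
/- Let A be a (not necessarily associative) algebra over a field F, let μ ∈ Cent(A), and let R : A → A be a linear map. Then the subspace I(A) = {(μ(x)+R(x), x) : x ∈ A} is a two-sided ideal of the double D_{R,μ}(A) if and only if R is a Rota–Baxter operator of weight μ. -/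
/-- The product of the double `D_{R,μ}(A) = A × A`:
`(a,b̄)*(x,ȳ) = ax + R(ay) − aR(y) + R(bx) − R(b)x
             + (ay + bx − R(b)y − bR(y) − μ(by))‾`. -/
def doubleMul {F A : Type*} [Field F] [AddCommGroup A] [Module F A]
    (mul : A →ₗ[F] A →ₗ[F] A) (R μ : A →ₗ[F] A) (p q : A × A) : A × A :=
  (mul p.1 q.1 + R (mul p.1 q.2) - mul p.1 (R q.2) + R (mul p.2 q.1) - mul (R p.2) q.1,
   mul p.1 q.2 + mul p.2 q.1 - mul (R p.2) q.2 - mul p.2 (R q.2) - μ (mul p.2 q.2))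

/-!
The subspace `I(A)` is a complement of `A × 0` in `A × A`. For every `(a, b)` and `x`, the product
`(a, b) * i(x)` is an element of `I(A)` minus `(d, 0)`, where
`d = R(b)R(x) - R(R(b)x + bR(x) + μ(bx))`, and likewise for `i(x) * (a, b)` with `b` and `x`
exchanged in `d`. Hence absorption on either side alone already amounts to the Rota–Baxter identity.
-/

theorem mk_zero_mem_range_prod_id_iff {S M N : Type*} [Semiring S] [AddCommMonoid M] [Module S M]
    [AddCommMonoid N] [Module S N] (f : M →ₗ[S] N) {n : N} :
    (n, (0 : M)) ∈ LinearMap.range (f.prod LinearMap.id) ↔ n = 0 := by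
  simp [eq_comm]

section RotaBaxter

variable {F A : Type*} [Field F] [AddCommGroup A] [Module F A]
  (mul : A →ₗ[F] A →ₗ[F] A) (μ R : A →ₗ[F] A)

/-- The failure of the Rota–Baxter identity of weight `μ` for `R` at the pair `(x, y)`. -/
def rotaBaxterDefect (x y : A) : A :=
  mul (R x) (R y) - R (mul (R x) y + mul x (R y) + μ (mul x y))

/-- The map `i : A → D_{R,μ}(A)`, `i(x) = (μ(x) + R(x), x)`, whose range is `I(A)`. -/
abbrev doubleEmbedding : A →ₗ[F] A × A :=
  (μ + R).prod LinearMap.id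

theorem doubleEmbedding_apply (x : A) : doubleEmbedding μ R x = (μ x + R x, x) :=
  rfl

theorem isRotaBaxterOp_iff_rotaBaxterDefect_eq_zero :
    IsRotaBaxterOp mul μ R ↔ ∀ x y, rotaBaxterDefect mul μ R x y = 0 := by
  simp only [IsRotaBaxterOp, rotaBaxterDefect, sub_eq_zero]

theorem doubleEmbedding_sub_mk_zero_mem_range_iff {y d : A} :
    doubleEmbedding μ R y - (d, 0) ∈ LinearMap.range (doubleEmbedding μ R) ↔ d = 0 := by
  rw [Submodule.sub_mem_iff_right _ (LinearMap.mem_range_self _ y), mk_zero_mem_range_prod_id_iff]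

variable {mul μ}

theorem doubleMul_doubleEmbedding_right (hμ : ∀ x y, μ (mul x y) = mul x (μ y)) (p : A × A)
    (x : A) :
    doubleMul mul R μ p (doubleEmbedding μ R x) =
      doubleEmbedding μ R (mul p.1 x - mul (R p.2) x) - (rotaBaxterDefect mul μ R p.2 x, 0) := by
  simp only [doubleMul, doubleEmbedding_apply, rotaBaxterDefect, map_add, map_sub, ← hμ,
    Prod.mk_sub_mk, sub_zero, Prod.mk.injEq]
  constructor <;> abel

theorem doubleMul_doubleEmbedding_left (hμ : ∀ x y, μ (mul x y) = mul (μ x) y) (p : A × A)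
    (x : A) :
    doubleMul mul R μ (doubleEmbedding μ R x) p =
      doubleEmbedding μ R (mul x p.1 - mul x (R p.2)) - (rotaBaxterDefect mul μ R x p.2, 0) := by
  simp only [doubleMul, doubleEmbedding_apply, rotaBaxterDefect, map_add, map_sub,
    LinearMap.add_apply, ← hμ, Prod.mk_sub_mk, sub_zero, Prod.mk.injEq]
  constructor <;> abel

theorem range_doubleEmbedding_left_absorbing_iff (hμ : ∀ x y, μ (mul x y) = mul x (μ y)) :
    (∀ p, ∀ q ∈ LinearMap.range (doubleEmbedding μ R),
        doubleMul mul R μ p q ∈ LinearMap.range (doubleEmbedding μ R)) ↔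
      IsRotaBaxterOp mul μ R := by
  have absorbs_iff (p : A × A) (x : A) :
      doubleMul mul R μ p (doubleEmbedding μ R x) ∈ LinearMap.range (doubleEmbedding μ R) ↔
        rotaBaxterDefect mul μ R p.2 x = 0 := by
    rw [doubleMul_doubleEmbedding_right R hμ, doubleEmbedding_sub_mk_zero_mem_range_iff]
  rw [isRotaBaxterOp_iff_rotaBaxterDefect_eq_zero]
  constructor
  · intro h b x
    exact (absorbs_iff (0, b) x).1 (h _ _ (LinearMap.mem_range_self _ x))
  · rintro hR p _ ⟨x, rfl⟩
    exact (absorbs_iff p x).2 (hR p.2 x)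

theorem range_doubleEmbedding_right_absorbing_iff (hμ : ∀ x y, μ (mul x y) = mul (μ x) y) :
    (∀ p, ∀ q ∈ LinearMap.range (doubleEmbedding μ R),
        doubleMul mul R μ q p ∈ LinearMap.range (doubleEmbedding μ R)) ↔
      IsRotaBaxterOp mul μ R := by
  have absorbs_iff (p : A × A) (x : A) :
      doubleMul mul R μ (doubleEmbedding μ R x) p ∈ LinearMap.range (doubleEmbedding μ R) ↔
        rotaBaxterDefect mul μ R x p.2 = 0 := by
    rw [doubleMul_doubleEmbedding_left R hμ, doubleEmbedding_sub_mk_zero_mem_range_iff]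
  rw [isRotaBaxterOp_iff_rotaBaxterDefect_eq_zero]
  constructor
  · intro h x b
    exact (absorbs_iff (0, b) x).1 (h _ _ (LinearMap.mem_range_self _ x))
  · rintro hR p _ ⟨x, rfl⟩
    exact (absorbs_iff p x).2 (hR x p.2)

end RotaBaxter

/-- the subspace `I(A) = {(μ(x)+R(x), x) : x ∈ A}` is a two-sided ideal
of the double `D_{R,μ}(A)` if and only if `R` is a Rota–Baxter operator of weight `μ`. -/
theorem statement6 {F A : Type*} [Field F] [AddCommGroup A] [Module F A]
    (mul : A →ₗ[F] A →ₗ[F] A) (μ : A →ₗ[F] A) (hμ : IsCentrumMap mul μ)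
    (R : A →ₗ[F] A) :
    (∀ p : A × A, ∀ q ∈ LinearMap.range ((μ + R).prod (LinearMap.id : A →ₗ[F] A)),
        doubleMul mul R μ p q ∈
            LinearMap.range ((μ + R).prod (LinearMap.id : A →ₗ[F] A)) ∧
        doubleMul mul R μ q p ∈
            LinearMap.range ((μ + R).prod (LinearMap.id : A →ₗ[F] A))) ↔
    IsRotaBaxterOp mul μ R := by
  have left_absorbing_iff := range_doubleEmbedding_left_absorbing_iff R fun x y => (hμ x y).2
  have right_absorbing_iff := range_doubleEmbedding_right_absorbing_iff R fun x y => (hμ x y).1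
  constructor
  · intro h
    exact left_absorbing_iff.1 fun p q hq => (h p q hq).1
  · intro hR p q hq
    exact ⟨left_absorbing_iff.2 hR p q hq, right_absorbing_iff.2 hR p q hq⟩
end

section
/- Let A be a (not necessarily associative) algebra over a field F and let R : A → A be a Rota–Baxter operator of weight μ ∈ Cent(A). Then I(A)*I(A) = 0 in the double D_{R,μ}(A) (i.e. i(x)*i(y) = 0 for all x,y ∈ A) if and only if μ(xy) = 0 for all x,y ∈ A; and in that case R is a Rota–Baxter operator of weight 0, i.e. R(x)R(y) = R(R(x)y + xR(y)) for all x,y ∈ A. -/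
/-!
The embedding `i` satisfies `i x * i y = i (μ (x * y))` in the double. Since `i` is injective, the
products `i x * i y` all vanish if and only if `μ` kills every product `x * y`, and then the weight
term drops out of the Rota–Baxter identity.
-/

namespace RotaBaxter

section NonUnitalNonAssocRing

variable {A : Type*} [NonUnitalNonAssocRing A]

/-- `R` is a Rota–Baxter operator of weight `μ` on a nonassociative ring. Weights are elements of
Mathlib's centroid, which are the additive centrum maps. -/
def IsRotaBaxter (μ : CentroidHom A) (R : A →+ A) : Prop :=
  ∀ x y : A, R x * R y = R (R x * y + x * R y + μ (x * y))

/-- The product of the double of a nonassociative ring, for a weight `μ` and an operator `R`,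
as a bare operation on `A × A`, which already carries its componentwise product. -/
def doubleProd (μ : CentroidHom A) (R : A →+ A) (p q : A × A) : A × A :=
  (p.1 * q.1 + R (p.1 * q.2) - p.1 * R q.2 + R (p.2 * q.1) - R p.2 * q.1,
   p.1 * q.2 + p.2 * q.1 - R p.2 * q.2 - p.2 * R q.2 - μ (p.2 * q.2))

/-- The embedding `i x = (μ x + R x, x)` of a nonassociative ring into its double. -/
def embed (μ : CentroidHom A) (R : A →+ A) : A →+ A × A :=
  ((μ : A →+ A) + R).prod (AddMonoidHom.id A)

variable {μ : CentroidHom A} {R : A →+ A}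

theorem embed_apply (x : A) : embed μ R x = (μ x + R x, x) := rfl

theorem embed_injective : Function.Injective (embed μ R) :=
  fun _ _ h => congrArg Prod.snd h

theorem doubleProd_embed_embed (hR : IsRotaBaxter μ R) (x y : A) :
    doubleProd μ R (embed μ R x) (embed μ R y) = embed μ R (μ (x * y)) := by
  have weight_mul (a b : A) : μ a * b = μ (a * b) := (map_mul_right μ a b).symm
  have mul_weight (a b : A) : a * μ b = μ (a * b) := (map_mul_left μ a b).symm
  have mul_map_map : R x * R y = R (R x * y) + R (x * R y) + R (μ (x * y)) := by
    rw [hR x y, map_add, map_add]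
  ext
  · simp only [doubleProd, embed_apply, add_mul, mul_add, map_add, weight_mul, mul_weight,
      mul_map_map]
    abel
  · simp only [doubleProd, embed_apply, add_mul, mul_add, weight_mul, mul_weight]
    abel

theorem doubleProd_embed_embed_eq_zero_iff (hR : IsRotaBaxter μ R) (x y : A) :
    doubleProd μ R (embed μ R x) (embed μ R y) = 0 ↔ μ (x * y) = 0 := by
  rw [doubleProd_embed_embed hR, map_eq_zero_iff _ embed_injective]

end NonUnitalNonAssocRing

section Bilinear

variable {F A : Type*}

/-- The nonassociative ring whose product is a given bilinear map. -/
abbrev ringOfBilin [CommSemiring F] [AddCommGroup A] [Module F A]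
    (mul : A →ₗ[F] A →ₗ[F] A) : NonUnitalNonAssocRing A where
  mul x y := mul x y
  left_distrib x := map_add (mul x)
  right_distrib := mul.map_add₂
  zero_mul := mul.map_zero₂
  mul_zero x := map_zero (mul x)

/-- A centrum map of the algebra `(A, mul)` as an element of the centroid of the ring
`ringOfBilin mul`. -/
def centroidHomOfIsCentrumMap [Field F] [AddCommGroup A] [Module F A]
    {mul : A →ₗ[F] A →ₗ[F] A} {μ : A →ₗ[F] A} (hμ : IsCentrumMap mul μ) :
    letI := ringOfBilin mul
    CentroidHom A :=
  letI := ringOfBilin mul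
  { μ.toAddMonoidHom with
    map_mul_left' := fun x y => (hμ x y).2
    map_mul_right' := fun x y => (hμ x y).1 }

end Bilinear

end RotaBaxter

open RotaBaxter in
theorem statement7_general {A : Type*} [NonUnitalNonAssocRing A]
    (μ : CentroidHom A) (R : A →+ A) (hR : IsRotaBaxter μ R) :
    ((∀ x y : A, doubleProd μ R (embed μ R x) (embed μ R y) = 0) ↔
        (∀ x y : A, μ (x * y) = 0)) ∧
    ((∀ x y : A, μ (x * y) = 0) →
        ∀ x y : A, R x * R y = R (R x * y + x * R y)) := by
  refine ⟨forall₂_congr (doubleProd_embed_embed_eq_zero_iff hR), fun hμ x y => ?_⟩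
  simpa only [hμ, add_zero] using hR x y

/-- for a Rota–Baxter operator `R` of weight `μ`, one has
`i(x)*i(y) = 0` in `D_{R,μ}(A)` for all `x,y` iff `μ(xy) = 0` for all `x,y`; and in
that case `R` is a Rota–Baxter operator of weight `0`. Here `i(x) = (μ(x)+R(x), x)`. -/
theorem statement7 {F A : Type*} [Field F] [AddCommGroup A] [Module F A]
    (mul : A →ₗ[F] A →ₗ[F] A) (μ R : A →ₗ[F] A)
    (hμ : IsCentrumMap mul μ) (hR : IsRotaBaxterOp mul μ R) :
    ((∀ x y : A, doubleMul mul R μ (μ x + R x, x) (μ y + R y, y) = 0) ↔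
        (∀ x y : A, μ (mul x y) = 0)) ∧
    ((∀ x y : A, μ (mul x y) = 0) →
        ∀ x y : A, mul (R x) (R y) = R (mul (R x) y + mul x (R y))) := by
  let := RotaBaxter.ringOfBilin mul
  exact statement7_general (RotaBaxter.centroidHomOfIsCentrumMap hμ) R.toAddMonoidHom hR
end

section
/- Let A be a (not necessarily associative) algebra over a field F and let R : A → A be a Rota–Baxter operator of weight μ ∈ Cent(A), where μ is an invertible linear map. Then the double D_{R,μ}(A) decomposes as a direct sum of two ideals, D_{R,μ}(A) = I(A) ⊕ J(A) with J(A) = {(μ(x),0) − i(x) : x ∈ A}, satisfying I(A)*J(A) = J(A)*I(A) = 0, and both I(A) and J(A) are isomorphic to A as algebras; in particular D_{R,μ}(A) is isomorphic as an algebra to the direct product A × A with componentwise multiplication. -/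
/-!
Put `S = μ + R`. Then `I(A)` and `J(A)` are the graphs of `S` and `R`, that is, the kernels of
`(a, b) ↦ a - S b` and `(a, b) ↦ a - R b`. Both maps are surjective homomorphisms from the double
onto `A`: for `R` this is the Rota–Baxter identity, and it carries over to `S` because `S` is a
Rota–Baxter operator of weight `-μ` with the same double. The two kernels are complementary
because `S - R = μ` is bijective, so the double is the product of its two quotients `A`.
-/

section GraphProj

variable {K M N : Type*} [Ring K] [AddCommGroup M] [Module K M] [AddCommGroup N] [Module K N]

/-- The projection of `M × N` onto `M` along the graph `{(f b, b)}` of a linear map `f : N → M`.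
The graph is written with the value first, as in the double of an algebra. -/
def graphProj (f : N →ₗ[K] M) : M × N →ₗ[K] M :=
  LinearMap.fst K M N - f ∘ₗ LinearMap.snd K M N

lemma graphProj_apply (f : N →ₗ[K] M) (p : M × N) : graphProj f p = p.1 - f p.2 := rfl

lemma graphProj_surjective (f : N →ₗ[K] M) : Function.Surjective (graphProj f) :=
  fun a => ⟨(a, 0), by simp [graphProj_apply]⟩

lemma mem_ker_graphProj {f : N →ₗ[K] M} {p : M × N} :
    p ∈ LinearMap.ker (graphProj f) ↔ p.1 = f p.2 := by
  rw [LinearMap.mem_ker, graphProj_apply, sub_eq_zero]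

lemma ker_graphProj (f : N →ₗ[K] M) :
    LinearMap.ker (graphProj f) = LinearMap.range (f.prod LinearMap.id) := by
  ext ⟨a, b⟩
  rw [mem_ker_graphProj]
  simp [eq_comm]

lemma isCompl_ker_graphProj {f g : N →ₗ[K] M} (h : Function.Bijective (g - f)) :
    IsCompl (LinearMap.ker (graphProj f)) (LinearMap.ker (graphProj g)) := by
  refine ⟨Submodule.disjoint_def.2 ?_, Submodule.codisjoint_iff_exists_add_eq.2 ?_⟩
  · rintro ⟨a, b⟩ hf hg
    obtain rfl : a = f b := mem_ker_graphProj.1 hf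
    have hfg : f b = g b := mem_ker_graphProj.1 hg
    obtain rfl : b = 0 := (map_eq_zero_iff _ h.1).1 (by simp [hfg])
    simp
  · rintro ⟨a, b⟩
    obtain ⟨v, hv⟩ := h.2 (a - f b)
    refine ⟨(f (b - v), b - v), (g v, v), mem_ker_graphProj.2 rfl, mem_ker_graphProj.2 rfl, ?_⟩
    have hsum : f (b - v) + g v = a := by
      rw [map_sub, sub_add_eq_add_sub, add_sub_assoc, ← LinearMap.sub_apply, hv, add_sub_cancel]
    exact Prod.ext hsum (sub_add_cancel b v)

end GraphProj

section Ideal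

variable {K M : Type*}

/-- The submodule `I` is a two-sided ideal for the (not necessarily associative) product `m`.
The product is a bare function so that `doubleMul` can be used as it stands. -/
def IsMulIdeal [Semiring K] [AddCommMonoid M] [Module K M] (m : M → M → M)
    (I : Submodule K M) : Prop :=
  ∀ p : M, ∀ q ∈ I, m p q ∈ I ∧ m q p ∈ I

lemma IsMulIdeal.mul_eq_zero_of_disjoint [Semiring K] [AddCommMonoid M] [Module K M]
    {m : M → M → M} {I J : Submodule K M} (hI : IsMulIdeal m I) (hJ : IsMulIdeal m J)
    (hIJ : Disjoint I J) {p q : M} (hp : p ∈ I) (hq : q ∈ J) : m p q = 0 ∧ m q p = 0 :=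
  ⟨Submodule.disjoint_def.1 hIJ _ (hI q p hp).2 (hJ p q hq).1,
    Submodule.disjoint_def.1 hIJ _ (hI q p hp).1 (hJ p q hq).2⟩

lemma isMulIdeal_ker {N : Type*} [CommSemiring K] [AddCommMonoid M] [Module K M]
    [AddCommMonoid N] [Module K N] {m : M → M → M} {n : N →ₗ[K] N →ₗ[K] N} {f : M →ₗ[K] N}
    (hmul : ∀ p q, f (m p q) = n (f p) (f q)) : IsMulIdeal m (LinearMap.ker f) := by
  intro p q hq
  have hq : f q = 0 := hq
  simp only [LinearMap.mem_ker, hmul, hq, map_zero, LinearMap.zero_apply, and_self]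

lemma IsMulIdeal.exists_equiv_of_isCompl_ker {N : Type*} [Ring K] [AddCommGroup M] [Module K M]
    [AddCommGroup N] [Module K N] {m : M → M → M} {n : N → N → N} {I : Submodule K M}
    (hI : IsMulIdeal m I) {f : M →ₗ[K] N} (hmul : ∀ p q, f (m p q) = n (f p) (f q))
    (hf : Function.Surjective f) (hIf : IsCompl I (LinearMap.ker f)) :
    ∃ e : N ≃ₗ[K] I, ∀ x y, (e (n x y) : M) = m (e x) (e y) := by
  let e : I ≃ₗ[K] N := f.kerComplementEquivRange hIf ≪≫ₗ LinearEquiv.ofTop _ (f.range_eq_top.2 hf)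
  have he : ∀ c : I, e c = f c := fun _ => rfl
  refine ⟨e.symm, fun x y => ?_⟩
  let c : I := ⟨m (e.symm x) (e.symm y), (hI _ _ (e.symm y).2).1⟩
  have hc : e c = n x y := by
    rw [he, hmul, ← he, ← he, e.apply_symm_apply, e.apply_symm_apply]
  exact congrArg Subtype.val (e.symm_apply_eq.2 hc.symm)

end Ideal

section Double

variable {F A : Type*} [Field F] [AddCommGroup A] [Module F A]
  {mul : A →ₗ[F] A →ₗ[F] A} {μ R : A →ₗ[F] A}

lemma IsRotaBaxterOp.weight_add (hR : IsRotaBaxterOp mul μ R) (hμ : IsCentrumMap mul μ) :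
    IsRotaBaxterOp mul (-μ) (μ + R) := by
  intro x y
  have harg : mul ((μ + R) x) y + mul x ((μ + R) y) + (-μ) (mul x y) =
      mul (R x) y + mul x (R y) + μ (mul x y) := by
    simp only [LinearMap.add_apply, LinearMap.neg_apply, map_add, ← (hμ x y).1, ← (hμ x y).2]
    abel
  rw [harg, LinearMap.add_apply μ R (_ + _), ← hR x y]
  simp only [LinearMap.add_apply, map_add, ← (hμ _ _).1, ← (hμ _ _).2]
  abel

lemma doubleMul_weight_add (hμ : IsCentrumMap mul μ) :
    doubleMul mul (μ + R) (-μ) = doubleMul mul R μ := by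
  funext p q
  ext <;>
  · simp only [doubleMul, LinearMap.add_apply, LinearMap.neg_apply, map_add,
      ← (hμ _ _).1, ← (hμ _ _).2]
    abel

lemma IsRotaBaxterOp.graphProj_doubleMul (hR : IsRotaBaxterOp mul μ R) (p q : A × A) :
    graphProj R (doubleMul mul R μ p q) = mul (graphProj R p) (graphProj R q) := by
  have h : mul (R p.2) (R q.2) =
      R (mul (R p.2) q.2) + R (mul p.2 (R q.2)) + R (μ (mul p.2 q.2)) := by
    rw [hR, map_add, map_add]
  simp only [doubleMul, graphProj_apply, map_add, map_sub, LinearMap.sub_apply, h]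
  abel

lemma IsRotaBaxterOp.graphProj_add_doubleMul (hR : IsRotaBaxterOp mul μ R)
    (hμ : IsCentrumMap mul μ) (p q : A × A) :
    graphProj (μ + R) (doubleMul mul R μ p q) =
      mul (graphProj (μ + R) p) (graphProj (μ + R) q) := by
  rw [← doubleMul_weight_add hμ]
  exact (hR.weight_add hμ).graphProj_doubleMul p q

end Double

/-- if `R` is a Rota–Baxter operator of invertible weight `μ`, then
`D_{R,μ}(A) = I(A) ⊕ J(A)`, where `I(A) = {i(x) = (μ(x)+R(x), x)}` and
`J(A) = {(μ(x),0) - i(x)}` are ideals with `I(A)*J(A) = J(A)*I(A) = 0`, each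
isomorphic to `A` as an algebra; in particular `D_{R,μ}(A)` is isomorphic as an
algebra to the direct product `A × A` with componentwise multiplication. -/
theorem statement8 {F A : Type*} [Field F] [AddCommGroup A] [Module F A]
    (mul : A →ₗ[F] A →ₗ[F] A) (μ R : A →ₗ[F] A)
    (hμ : IsCentrumMap mul μ) (hR : IsRotaBaxterOp mul μ R)
    (hbij : Function.Bijective μ) :
    let dmul := doubleMul mul R μ
    let I : Submodule F (A × A) :=
      LinearMap.range ((μ + R).prod (LinearMap.id : A →ₗ[F] A))
    let J : Submodule F (A × A) :=
      LinearMap.range (μ.prod (0 : A →ₗ[F] A) - (μ + R).prod (LinearMap.id : A →ₗ[F] A))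
    (∀ p : A × A, ∀ q ∈ I, dmul p q ∈ I ∧ dmul q p ∈ I) ∧
    (∀ p : A × A, ∀ q ∈ J, dmul p q ∈ J ∧ dmul q p ∈ J) ∧
    IsCompl I J ∧
    (∀ p ∈ I, ∀ q ∈ J, dmul p q = 0 ∧ dmul q p = 0) ∧
    (∃ eI : A ≃ₗ[F] I, ∀ x y : A,
        ((eI (mul x y) : A × A)) = dmul (eI x : A × A) (eI y : A × A)) ∧
    (∃ eJ : A ≃ₗ[F] J, ∀ x y : A,
        ((eJ (mul x y) : A × A)) = dmul (eJ x : A × A) (eJ y : A × A)) ∧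
    (∃ e : (A × A) ≃ₗ[F] A × A, ∀ p q : A × A,
        e (dmul p q) = (mul (e p).1 (e q).1, mul (e p).2 (e q).2)) := by
  intro dmul I J
  have hI : I = LinearMap.ker (graphProj (μ + R)) := (ker_graphProj _).symm
  have hJ : J = LinearMap.ker (graphProj R) := by
    have hneg : μ.prod 0 - (μ + R).prod LinearMap.id = -(R.prod LinearMap.id) := by
      ext <;> simp
    rw [ker_graphProj, ← LinearMap.range_neg, ← hneg]
  have hφ := hR.graphProj_doubleMul
  have hψ := hR.graphProj_add_doubleMul hμ
  have idealI : IsMulIdeal dmul I := hI ▸ isMulIdeal_ker hψ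
  have idealJ : IsMulIdeal dmul J := hJ ▸ isMulIdeal_ker hφ
  have hJI : IsCompl (LinearMap.ker (graphProj R)) (LinearMap.ker (graphProj (μ + R))) :=
    isCompl_ker_graphProj (by rwa [add_sub_cancel_right])
  have hIJ : IsCompl I J := by rw [hI, hJ]; exact hJI.symm
  exact ⟨idealI, idealJ, hIJ,
    fun _ hp _ hq => idealI.mul_eq_zero_of_disjoint idealJ hIJ.disjoint hp hq,
    idealI.exists_equiv_of_isCompl_ker hφ (graphProj_surjective R) (hJ ▸ hIJ),
    idealJ.exists_equiv_of_isCompl_ker hψ (graphProj_surjective _) (hI ▸ hIJ.symm),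
    LinearMap.equivProdOfSurjectiveOfIsCompl _ _
      (LinearMap.range_eq_top.2 (graphProj_surjective R))
      (LinearMap.range_eq_top.2 (graphProj_surjective (μ + R))) hJI,
    fun p q => Prod.ext (hφ p q) (hψ p q)⟩
end

section
/- Let A be a simple (not necessarily associative) algebra over a field F, i.e. A·A ≠ 0 and the only two-sided ideals of A are 0 and A. Let R : A → A and μ : A → A be arbitrary linear maps, and let I be a two-sided ideal of the double D_{R,μ}(A) with I ≠ 0 and I ≠ D_{R,μ}(A). Then I ∩ (A × {0}) = 0 and D_{R,μ}(A) = (A × {0}) ⊕ I as vector spaces; in particular I is isomorphic to A as a vector space. -/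
/-!
The ideal `I` meets `A × 0` in an ideal of the simple algebra `A`, and the second projection
maps `I` onto an ideal of `A`; each of these is `0` or `A`. They cannot be `A` and `0`
respectively: the second coordinate of `(0, x) * (y, 0)` is `xy`, so if `I` contains `A × 0`
then the image of `I` contains `A · A ≠ 0`. Of the remaining cases, two `0`s give `I = 0` and
two `A`s give `I = A × A`, so for a proper nonzero `I` the intersection is `0` and the image is
`A`.
-/

/-- A two-sided ideal of an algebra, the latter given by a binary operation `op` on a module `B`;
bilinearity of `op` is not built in, so that the notion applies to both `A` and its double. -/
def IsTwoSidedIdeal {F B : Type*} [Semiring F] [AddCommMonoid B] [Module F B]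
    (op : B → B → B) (J : Submodule F B) : Prop :=
  ∀ a : B, ∀ b ∈ J, op a b ∈ J ∧ op b a ∈ J

theorem ker_snd_eq_submodule_fst (F M N : Type*) [Semiring F] [AddCommMonoid M] [AddCommMonoid N]
    [Module F M] [Module F N] : (LinearMap.snd F M N).ker = Submodule.fst F M N :=
  rfl

section Double

variable {F A : Type*} [Field F] [AddCommGroup A] [Module F A]
  {mul : A →ₗ[F] A →ₗ[F] A} {R μ : A →ₗ[F] A} {I : Submodule F (A × A)}

theorem doubleMul_inl_inl (a b : A) : doubleMul mul R μ (a, 0) (b, 0) = (mul a b, 0) := by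
  simp [doubleMul]

theorem snd_doubleMul_inl_left (a : A) (q : A × A) :
    (doubleMul mul R μ (a, 0) q).2 = mul a q.2 := by
  simp [doubleMul]

theorem snd_doubleMul_inl_right (p : A × A) (a : A) :
    (doubleMul mul R μ p (a, 0)).2 = mul p.2 a := by
  simp [doubleMul]

theorem IsTwoSidedIdeal.comap_inl (hI : IsTwoSidedIdeal (doubleMul mul R μ) I) :
    IsTwoSidedIdeal (mul · ·) (I.comap (LinearMap.inl F A A)) := by
  intro a b hb
  simpa only [Submodule.mem_comap, LinearMap.inl_apply, doubleMul_inl_inl] using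
    hI (a, 0) (b, 0) hb

theorem IsTwoSidedIdeal.map_snd (hI : IsTwoSidedIdeal (doubleMul mul R μ) I) :
    IsTwoSidedIdeal (mul · ·) (I.map (LinearMap.snd F A A)) := by
  rintro a _ ⟨q, hq, rfl⟩
  obtain ⟨hleft, hright⟩ := hI (a, 0) q hq
  exact ⟨⟨_, hleft, snd_doubleMul_inl_left a q⟩,
    ⟨_, hright, snd_doubleMul_inl_right q a⟩⟩

theorem IsTwoSidedIdeal.disjoint_fst_or_fst_le (hI : IsTwoSidedIdeal (doubleMul mul R μ) I)
    (hsimple : ∀ J : Submodule F A, IsTwoSidedIdeal (mul · ·) J → J = ⊥ ∨ J = ⊤) :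
    Disjoint (Submodule.fst F A A) I ∨ Submodule.fst F A A ≤ I := by
  rw [← ker_snd_eq_submodule_fst, LinearMap.ker_snd]
  refine (hsimple _ hI.comap_inl).imp (fun hbot ↦ ?_) LinearMap.range_le_iff_comap.mpr
  rw [disjoint_iff, ← Submodule.map_comap_eq, hbot, Submodule.map_bot]

theorem IsTwoSidedIdeal.le_fst_or_codisjoint_fst (hI : IsTwoSidedIdeal (doubleMul mul R μ) I)
    (hsimple : ∀ J : Submodule F A, IsTwoSidedIdeal (mul · ·) J → J = ⊥ ∨ J = ⊤) :
    I ≤ Submodule.fst F A A ∨ Codisjoint (Submodule.fst F A A) I := by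
  rw [← ker_snd_eq_submodule_fst]
  refine (hsimple _ hI.map_snd).imp LinearMap.le_ker_iff_map.mpr fun htop ↦ ?_
  have range_snd : (LinearMap.snd F A A).range = ⊤ :=
    LinearMap.range_eq_top.mpr LinearMap.snd_surjective
  exact (codisjoint_iff.mpr ((LinearMap.map_eq_top_iff range_snd).mp htop)).symm

theorem IsTwoSidedIdeal.not_le_fst_of_fst_le (hI : IsTwoSidedIdeal (doubleMul mul R μ) I)
    (hmul : ∃ x y : A, mul x y ≠ 0) (hfst : Submodule.fst F A A ≤ I) :
    ¬I ≤ Submodule.fst F A A := by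
  obtain ⟨x, y, hxy⟩ := hmul
  intro hle
  have hy : (y, (0 : A)) ∈ I := hfst (by simp [Submodule.fst])
  have hsnd : (doubleMul mul R μ (0, x) (y, 0)).2 = 0 := hle (hI (0, x) (y, 0) hy).1
  exact hxy ((snd_doubleMul_inl_right (0, x) y).symm.trans hsnd)

theorem IsTwoSidedIdeal.isCompl_fst (hI : IsTwoSidedIdeal (doubleMul mul R μ) I)
    (hmul : ∃ x y : A, mul x y ≠ 0)
    (hsimple : ∀ J : Submodule F A, IsTwoSidedIdeal (mul · ·) J → J = ⊥ ∨ J = ⊤)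
    (hbot : I ≠ ⊥) (htop : I ≠ ⊤) :
    IsCompl (Submodule.fst F A A) I := by
  rcases hI.disjoint_fst_or_fst_le hsimple, hI.le_fst_or_codisjoint_fst hsimple
    with ⟨hdisj | hge, hle | hcodisj⟩
  · exact absurd (hdisj.eq_bot_of_ge hle) hbot
  · exact ⟨hdisj, hcodisj⟩
  · exact absurd hle (hI.not_le_fst_of_fst_le hmul hge)
  · exact absurd (hcodisj.symm.eq_top_of_le hge) htop

end Double

/-- if `A` is a simple algebra (`A·A ≠ 0` and the only two-sided ideals
of `A` are `0` and `A`), `R, μ : A → A` are arbitrary linear maps and `I` is a proper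
nonzero two-sided ideal of `D_{R,μ}(A)`, then `I ∩ (A × 0) = 0`,
`D_{R,μ}(A) = (A × 0) ⊕ I` as vector spaces, and `I ≅ A` as vector spaces. -/
theorem statement9 {F A : Type*} [Field F] [AddCommGroup A] [Module F A]
    (mul : A →ₗ[F] A →ₗ[F] A)
    (hA2 : ∃ x y : A, mul x y ≠ 0)
    (hsimple : ∀ J : Submodule F A,
      (∀ a : A, ∀ b ∈ J, mul a b ∈ J ∧ mul b a ∈ J) → J = ⊥ ∨ J = ⊤)
    (R μ : A →ₗ[F] A)
    (I : Submodule F (A × A))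
    (hI : ∀ p : A × A, ∀ q ∈ I, doubleMul mul R μ p q ∈ I ∧ doubleMul mul R μ q p ∈ I)
    (hIbot : I ≠ ⊥) (hItop : I ≠ ⊤) :
    I ⊓ Submodule.fst F A A = ⊥ ∧
    IsCompl (Submodule.fst F A A) I ∧
    Nonempty (I ≃ₗ[F] A) := by
  have hcompl : IsCompl (Submodule.fst F A A) I :=
    IsTwoSidedIdeal.isCompl_fst hI hA2 hsimple hIbot hItop
  refine ⟨hcompl.symm.inf_eq_bot, hcompl, ?_⟩
  rw [← ker_snd_eq_submodule_fst] at hcompl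
  exact ⟨(Submodule.quotientEquivOfIsCompl _ I hcompl).symm.trans
    ((LinearMap.snd F A A).quotKerEquivOfSurjective LinearMap.snd_surjective)⟩
end

section
/- Let (g,ω) be a quadratic Lie algebra over a field F of characteristic different from 2, let μ ∈ Cent(g), and let μ* : g → g be a linear map adjoint to μ with respect to ω, i.e. ω(μ(x),y) = ω(x,μ*(y)) for all x,y ∈ g. Then μ*([x,y]) = μ([x,y]) for all x,y ∈ g. In particular, if g is perfect (i.e. [g,g] = g), then μ* = μ. -/
/-!
A centrum map `μ` is the same thing as an endomorphism of the adjoint module, and it can be moved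
between the two entries of a bracket. By invariance of `ω`,
`ω z (μ* ⁅x, y⁆) = ω (μ z) ⁅x, y⁆ = -ω ⁅x, μ z⁆ y = -ω ⁅μ x, z⁆ y = ω z ⁅μ x, y⁆`,
and nondegeneracy removes `z`. Since `x` acts on `y` and `z` throughout, the computation makes
sense on any Lie module, with one map on the algebra and another on the module.
-/

section LieModule

variable {R L M : Type*} [CommRing R] [LieRing L] [AddCommGroup M] [Module R M]
  [LieRingModule L M]

theorem adjoint_apply_lie_of_lieInvariant {Φ : LinearMap.BilinForm R M}
    (hinv : Φ.lieInvariant L) (hsep : Φ.SeparatingRight) {φ ψ : M → M}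
    (hadj : LinearMap.IsAdjointPair Φ Φ φ ψ) {f : L → L} (hf : ∀ x m, ⁅f x, m⁆ = ⁅x, φ m⁆)
    (x : L) (m : M) : ψ ⁅x, m⁆ = ⁅f x, m⁆ := by
  refine sub_eq_zero.mp (hsep _ fun n => ?_)
  rw [map_sub, sub_eq_zero]
  calc
    Φ n (ψ ⁅x, m⁆) = Φ (φ n) ⁅x, m⁆ := (hadj n _).symm
    _ = -Φ ⁅x, φ n⁆ m := by rw [hinv, neg_neg]
    _ = -Φ ⁅f x, n⁆ m := by rw [hf]
    _ = Φ n ⁅f x, m⁆ := by rw [hinv, neg_neg]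

end LieModule

section AdjointModule

variable {R L : Type*} [CommRing R] [LieRing L] [Module R L]

theorem lieInvariant_self_iff {ω : LinearMap.BilinForm R L} :
    ω.lieInvariant L ↔ ∀ a b c : L, ω ⁅a, b⁆ c = ω a ⁅b, c⁆ := by
  have swap (a b c : L) : ω ⁅a, b⁆ c = -ω ⁅b, a⁆ c := by
    rw [← lie_skew, map_neg, LinearMap.neg_apply]
  refine ⟨fun h a b c => ?_, fun h a b c => ?_⟩
  · rw [swap, h, neg_neg]
  · rw [swap, h]

theorem lieModuleHom_self_apply_lie (μ : L →ₗ⁅R,L⁆ L) (x y : L) : μ ⁅x, y⁆ = ⁅μ x, y⁆ := by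
  rw [← lie_skew, map_neg, LieModuleHom.map_lie, lie_skew]

end AdjointModule

theorem statement11_general {R L : Type*} [CommRing R] [LieRing L] [LieAlgebra R L]
    {ω : LinearMap.BilinForm R L} (hinv : ω.lieInvariant L) (hsep : ω.SeparatingRight)
    (μ : L →ₗ⁅R,L⁆ L) (μs : L →ₗ[R] L) (hadj : LinearMap.IsAdjointPair ω ω μ μs) :
    (∀ x y : L, μs ⁅x, y⁆ = μ ⁅x, y⁆) ∧
    (Submodule.span R {w : L | ∃ x y : L, w = ⁅x, y⁆} = ⊤ → μs = μ) := by
  have lie_map_comm (x y : L) : ⁅μ x, y⁆ = ⁅x, μ y⁆ := by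
    rw [← lieModuleHom_self_apply_lie, LieModuleHom.map_lie]
  have eq_on_lie (x y : L) : μs ⁅x, y⁆ = μ ⁅x, y⁆ := by
    rw [adjoint_apply_lie_of_lieInvariant hinv hsep hadj lie_map_comm, lieModuleHom_self_apply_lie]
  refine ⟨eq_on_lie, fun hperfect => LinearMap.ext_on hperfect ?_⟩
  rintro _ ⟨x, y, rfl⟩
  exact eq_on_lie x y

/-- on a quadratic Lie algebra `(g, ω)` over a field of characteristic
≠ 2, if `μ` is a centrum map and `μ*` its adjoint with respect to `ω`, then
`μ*([x,y]) = μ([x,y])` for all `x,y`; in particular, if `g` is perfect then `μ* = μ`. -/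
theorem statement11 {F L : Type*} [Field F] [LieRing L] [LieAlgebra F L]
    (h2 : (2 : F) ≠ 0)
    (ω : L →ₗ[F] L →ₗ[F] F)
    (hsymm : ∀ x y : L, ω x y = ω y x)
    (hnondeg : ∀ x : L, (∀ y : L, ω x y = 0) → x = 0)
    (hinv : ∀ a b c : L, ω ⁅a, b⁆ c = ω a ⁅b, c⁆)
    (μ μs : L →ₗ[F] L)
    (hcent : ∀ x y : L, μ ⁅x, y⁆ = ⁅μ x, y⁆ ∧ μ ⁅x, y⁆ = ⁅x, μ y⁆)
    (hadj : ∀ x y : L, ω (μ x) y = ω x (μs y)) :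
    (∀ x y : L, μs ⁅x, y⁆ = μ ⁅x, y⁆) ∧
    ((Submodule.span F {w : L | ∃ x y : L, w = ⁅x, y⁆} = ⊤) → μs = μ) :=
  statement11_general (lieInvariant_self_iff.mpr hinv)
    (fun y hy => hnondeg y fun x => (hsymm y x).trans (hy x))
    { μ with map_lie' := (hcent _ _).2 } μs hadj
end

section
/- Let g be a Lie algebra over a field F of characteristic different from 2 with trivial center Z(g) = 0, let ω be a nondegenerate symmetric invariant bilinear form on g, and let θ : g × g → g be a bilinear map satisfying, for all x,y,z ∈ g: (i) θ(x,y) = −θ(y,x); (ii) ω(θ(x,y),z) = ω(x,θ(y,z)); (iii) [θ(x,y),z] = θ([x,z],y) + θ(x,[y,z]). Then there exists a linear map ν : [g,g] → g defined on the derived subalgebra [g,g] such that θ(x,y) = ν([x,y]) for all x,y ∈ g, and moreover ν([[x,y],z]) = [ν([x,y]),z] for all x,y,z ∈ g. -/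
/-!
The function `S x y z w = ω (θ x y) ⁅z, w⁆` has the symmetries of a curvature tensor: it is skew in
each pair, and pairing the Leibniz rule with a further element gives the Bianchi identity. Hence,
as `2` can be cancelled, it is symmetric under exchange of the two pairs, which by nondegeneracy
says that `⁅θ x y, z⁆ = θ ⁅x, y⁆ z`. Thus `θ w` is an inner derivation for each `w` in the derived
subalgebra, and as the center is trivial, `ν w` is the unique element with `ad (ν w) = θ w`.
-/

theorem two_nsmul_pair_symm_of_bianchi {X A : Type*} [AddCommGroup A] (S : X → X → X → X → A)
    (hleft : ∀ x y z w, S x y z w = -S y x z w) (hright : ∀ x y z w, S x y z w = -S x y w z)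
    (hbianchi : ∀ x y z w, S x y z w + S y z x w + S z x y w = 0) (x y z w : X) :
    2 • S x y z w = 2 • S z w x y := by
  -- The signs are chosen so that all terms but `2 • S x y z w` and `2 • S z w x y` cancel.
  have hsum : (S x y z w + S y z x w + S z x y w) + (S y z w x + S z w y x + S w y z x)
      - (S z w x y + S w x z y + S x z w y) - (S w x y z + S x y w z + S y w x z) = 0 := by
    simp only [hbianchi, add_zero, sub_zero]
  rw [hright y z w x, hright z w y x, hleft w y z x, hright w x z y, hleft x z w y,
    hright z x w y, hright x y w z, hright y w x z] at hsum
  rw [← sub_eq_zero, ← hsum]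
  abel

theorem form_skew_product_cyclic {R V N : Type*} [CommRing R] [AddCommGroup V] [Module R V]
    [AddCommGroup N] [Module R N] (ω : V →ₗ[R] V →ₗ[R] N) (θ : V →ₗ[R] V →ₗ[R] V)
    (hskew : ∀ x y, θ x y = -θ y x) (hassoc : ∀ x y z, ω (θ x y) z = ω x (θ y z)) (x y z : V) :
    ω (θ x y) z = ω (θ y z) x := by
  have hswap (a b c : V) : ω (θ a b) c = -ω (θ a c) b := by
    rw [hassoc, hskew, map_neg, hassoc]
  rw [hskew x y, map_neg, LinearMap.neg_apply, hswap, neg_neg]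

section Lie

variable {R L N : Type*} [CommRing R] [LieRing L] [LieAlgebra R L] [AddCommGroup N] [Module R N]

theorem form_product_lie_bianchi (ω : L →ₗ[R] L →ₗ[R] N)
    (hinv : ∀ a b c, ω ⁅a, b⁆ c = ω a ⁅b, c⁆) (θ : L →ₗ[R] L →ₗ[R] L)
    (hcyc : ∀ x y z, ω (θ x y) z = ω (θ y z) x)
    (hleib : ∀ x y z, ⁅θ x y, z⁆ = θ ⁅x, z⁆ y + θ x ⁅y, z⁆) (x y z w : L) :
    ω (θ x y) ⁅z, w⁆ + ω (θ y z) ⁅x, w⁆ + ω (θ z x) ⁅y, w⁆ = 0 := by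
  have hpaired : ω (θ x y) ⁅w, z⁆ = ω (θ y z) ⁅x, w⁆ + ω (θ z x) ⁅y, w⁆ :=
    calc ω (θ x y) ⁅w, z⁆ = ω (θ ⁅x, w⁆ y) z + ω (θ x ⁅y, w⁆) z := by
          rw [← hinv, hleib, map_add, LinearMap.add_apply]
      _ = ω (θ y z) ⁅x, w⁆ + ω (θ z x) ⁅y, w⁆ := by rw [hcyc ⁅x, w⁆, ← hcyc z x]
  rw [add_assoc, ← hpaired, ← lie_skew, map_neg, neg_add_cancel]

theorem lie_skew_product_eq_skew_product_lie (h2 : IsSMulRegular L (2 : R)) (ω : L →ₗ[R] L →ₗ[R] N)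
    (hnondeg : ω.SeparatingLeft) (hinv : ∀ a b c, ω ⁅a, b⁆ c = ω a ⁅b, c⁆)
    (θ : L →ₗ[R] L →ₗ[R] L) (hskew : ∀ x y, θ x y = -θ y x)
    (hassoc : ∀ x y z, ω (θ x y) z = ω x (θ y z))
    (hleib : ∀ x y z, ⁅θ x y, z⁆ = θ ⁅x, z⁆ y + θ x ⁅y, z⁆) (x y z : L) :
    ⁅θ x y, z⁆ = θ ⁅x, y⁆ z := by
  have hcyc := form_skew_product_cyclic ω θ hskew hassoc
  have hpair (w : L) : 2 • ω (θ x y) ⁅z, w⁆ = 2 • ω (θ z w) ⁅x, y⁆ :=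
    two_nsmul_pair_symm_of_bianchi (fun a b c d => ω (θ a b) ⁅c, d⁆)
      (fun a b c d => by rw [hskew, map_neg, LinearMap.neg_apply])
      (fun a b c d => by rw [← lie_skew, map_neg])
      (form_product_lie_bianchi ω hinv θ hcyc hleib) x y z w
  have hω : Function.Injective ω :=
    LinearMap.ker_eq_bot.mp (LinearMap.separatingLeft_iff_ker_eq_bot.mp hnondeg)
  have htwo (v w : L) : ω ((2 : R) • v) w = 2 • ω v w := by
    rw [ofNat_smul_eq_nsmul (R := R), map_nsmul, LinearMap.smul_apply]
  refine h2 (hω (LinearMap.ext fun w => ?_))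
  calc ω ((2 : R) • ⁅θ x y, z⁆) w = 2 • ω (θ x y) ⁅z, w⁆ := by rw [htwo, hinv]
    _ = 2 • ω (θ z w) ⁅x, y⁆ := hpair w
    _ = ω ((2 : R) • θ ⁅x, y⁆ z) w := by rw [htwo, hcyc ⁅x, y⁆]

theorem exists_linearMap_span_lie_eq {M W : Type*} [AddCommGroup M] [Module R M]
    [LieRingModule L M] [LieModule R L M] [LieModule.IsFaithful R L M] [AddCommGroup W]
    [Module R W] (τ : W →ₗ[R] M →ₗ[R] M) (s : Set W)
    (hs : ∀ w ∈ s, ∃ a : L, ∀ m, ⁅a, m⁆ = τ w m) :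
    ∃ ν : Submodule.span R s →ₗ[R] L, ∀ w m, ⁅ν w, m⁆ = τ w m := by
  let ρ : L →ₗ[R] Module.End R M := LieModule.toEnd R L M
  have hspan : Submodule.span R s ≤ (LinearMap.range ρ).comap τ :=
    Submodule.span_le.mpr fun w hw => (hs w hw).imp fun _ ha => LinearMap.ext ha
  refine ⟨(τ ∘ₗ (Submodule.span R s).subtype).codRestrictOfInjective ρ
    LieModule.IsFaithful.injective_toEnd fun w => hspan w.2, fun w m => ?_⟩
  exact LinearMap.congr_fun (LinearMap.codRestrictOfInjective_comp_apply _ ρ _ _ w) m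

theorem statement12_general [LieModule.IsFaithful R L L] (h2 : IsSMulRegular L (2 : R))
    (ω : L →ₗ[R] L →ₗ[R] N) (hnondeg : ω.SeparatingLeft)
    (hinv : ∀ a b c, ω ⁅a, b⁆ c = ω a ⁅b, c⁆)
    (θ : L →ₗ[R] L →ₗ[R] L) (hskew : ∀ x y, θ x y = -θ y x)
    (hassoc : ∀ x y z, ω (θ x y) z = ω x (θ y z))
    (hleib : ∀ x y z, ⁅θ x y, z⁆ = θ ⁅x, z⁆ y + θ x ⁅y, z⁆) :
    ∃ ν : ↥(Submodule.span R {w : L | ∃ x y : L, w = ⁅x, y⁆}) →ₗ[R] L,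
      (∀ x y : L, θ x y = ν ⟨⁅x, y⁆, Submodule.subset_span ⟨x, y, rfl⟩⟩) ∧
      (∀ x y z : L,
        ν ⟨⁅⁅x, y⁆, z⁆, Submodule.subset_span ⟨⁅x, y⁆, z, rfl⟩⟩ =
          ⁅ν ⟨⁅x, y⁆, Submodule.subset_span ⟨x, y, rfl⟩⟩, z⁆) := by
  have hlie := lie_skew_product_eq_skew_product_lie h2 ω hnondeg hinv θ hskew hassoc hleib
  obtain ⟨ν, hν⟩ := exists_linearMap_span_lie_eq θ {w : L | ∃ x y : L, w = ⁅x, y⁆} <| by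
    rintro _ ⟨x, y, rfl⟩
    exact ⟨θ x y, hlie x y⟩
  have hθ (x y : L) : θ x y = ν ⟨⁅x, y⁆, Submodule.subset_span ⟨x, y, rfl⟩⟩ :=
    LieModule.ext_of_isFaithful (R := R) L fun z => (hlie x y z).trans (hν ⟨_, _⟩ z).symm
  exact ⟨ν, hθ, fun x y z => by rw [← hθ, ← hθ, hlie]⟩

end Lie

/-- let `g` be a Lie algebra over a field of characteristic ≠ 2 with
trivial center, `ω` a nondegenerate symmetric invariant bilinear form, and
`θ : g × g → g` bilinear with `θ(x,y) = −θ(y,x)`, `ω(θ(x,y),z) = ω(x,θ(y,z))` and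
`[θ(x,y),z] = θ([x,z],y) + θ(x,[y,z])`. Then there exists a linear map
`ν : [g,g] → g` with `θ(x,y) = ν([x,y])` and `ν([[x,y],z]) = [ν([x,y]),z]`. -/
theorem statement12 {F L : Type*} [Field F] [LieRing L] [LieAlgebra F L]
    (h2 : (2 : F) ≠ 0)
    (hZ : ∀ x : L, (∀ y : L, ⁅x, y⁆ = 0) → x = 0)
    (ω : L →ₗ[F] L →ₗ[F] F)
    (hsymm : ∀ x y : L, ω x y = ω y x)
    (hnondeg : ∀ x : L, (∀ y : L, ω x y = 0) → x = 0)
    (hinv : ∀ a b c : L, ω ⁅a, b⁆ c = ω a ⁅b, c⁆)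
    (θ : L →ₗ[F] L →ₗ[F] L)
    (hskew : ∀ x y : L, θ x y = -θ y x)
    (hassoc : ∀ x y z : L, ω (θ x y) z = ω x (θ y z))
    (hleib : ∀ x y z : L, ⁅θ x y, z⁆ = θ ⁅x, z⁆ y + θ x ⁅y, z⁆) :
    ∃ ν : ↥(Submodule.span F {w : L | ∃ x y : L, w = ⁅x, y⁆}) →ₗ[F] L,
      (∀ x y : L, θ x y = ν ⟨⁅x, y⁆, Submodule.subset_span ⟨x, y, rfl⟩⟩) ∧
      (∀ x y z : L,
        ν ⟨⁅⁅x, y⁆, z⁆, Submodule.subset_span ⟨⁅x, y⁆, z, rfl⟩⟩ =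
          ⁅ν ⟨⁅x, y⁆, Submodule.subset_span ⟨x, y, rfl⟩⟩, z⁆) := by
  have : LieModule.IsFaithful F L L := (LieModule.isFaithful_iff' F L L).mpr hZ
  exact statement12_general (IsSMulRegular.of_ne_zero h2) ω hnondeg hinv θ hskew hassoc hleib
end

section
/- Let g be a perfect finite-dimensional Lie algebra over a field F of characteristic different from 2 with trivial center Z(g) = 0, let ω be a nondegenerate symmetric invariant bilinear form on g, and let θ : g × g → g be a bilinear map satisfying, for all x,y,z ∈ g: (i) θ(x,y) = −θ(y,x); (ii) ω(θ(x,y),z) = ω(x,θ(y,z)); (iii) [θ(x,y),z] = θ([x,z],y) + θ(x,[y,z]). Then there exists a centrum map ν ∈ Cent(g) such that θ(x,y) = ν([x,y]) = [ν(x),y] = [x,ν(y)] for all x,y ∈ g. -/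
/-!
The trilinear form `ω (θ a b) c` is skew-symmetric and invariant under the adjoint action. Hence
`R a b c d = ω (θ ⁅a, b⁆ c) d` has the symmetries of a Riemann curvature tensor: it is skew in each
pair of arguments, and invariance becomes the first Bianchi identity. As for curvature, the pair
symmetry `R a b c d = R c d a b` follows after cancelling a factor 2. It says that
`⁅θ z w, x⁆ = θ ⁅z, w⁆ x`, that is, `θ ⁅z, w⁆ = ad (θ z w)`. By perfectness every `θ u` is then of
the form `ad (ν u)`, and `ν u` is unique because `ad` is injective.
-/

theorem two_nsmul_pair_swap_of_bianchi {V A : Type*} [AddCommGroup A] {R : V → V → V → V → A}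
    (skew_left : ∀ a b c d, R a b c d = -R b a c d)
    (skew_right : ∀ a b c d, R a b c d = -R a b d c)
    (bianchi : ∀ a b c d, R a b c d + R a c d b + R a d b c = 0) (a b c d : V) :
    2 • R a b c d = 2 • R c d a b := by
  have flip (a b c d : V) : R a b c d = R b a d c := by
    rw [skew_left, skew_right, neg_neg]
  have hb : R a b c d + R d b a c + R b c a d = 0 := by
    rw [flip a b, flip d b]; exact bianchi b a d c
  have hc : R c d a b + R a c d b + R b c a d = 0 := by
    rw [flip a c, flip b c]; exact bianchi c d a b
  have hd : R c d a b + R d b a c + R a d b c = 0 := by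
    rw [flip c d, flip a d]; exact bianchi d c b a
  linear_combination (norm := module) bianchi a b c d + hb - hc - hd

section AssociativeForm

variable {R V : Type*} [CommRing R] [AddCommGroup V] [Module R V] {ω : LinearMap.BilinForm R V}
  {θ : V →ₗ[R] V →ₗ[R] V}

theorem form_apply_swap_right (hskew : ∀ x y, θ x y = -θ y x)
    (hassoc : ∀ x y z, ω (θ x y) z = ω x (θ y z)) (a b c : V) :
    ω (θ a b) c = -ω (θ a c) b := by
  rw [hassoc, hskew b c, map_neg, ← hassoc]

theorem form_apply_cyclic (hskew : ∀ x y, θ x y = -θ y x)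
    (hassoc : ∀ x y z, ω (θ x y) z = ω x (θ y z)) (a b c : V) :
    ω (θ a b) c = ω (θ b c) a := by
  rw [hskew a b, map_neg, LinearMap.neg_apply, form_apply_swap_right hskew hassoc b a c, neg_neg]

end AssociativeForm

section InvariantForm

variable {R L : Type*} [CommRing R] [LieRing L] [LieAlgebra R L] {ω : LinearMap.BilinForm R L}
  {θ : L →ₗ[R] L →ₗ[R] L}

theorem form_apply_lie_bianchi (hinv : ∀ a b c, ω ⁅a, b⁆ c = ω a ⁅b, c⁆)
    (hskew : ∀ x y, θ x y = -θ y x) (hassoc : ∀ x y z, ω (θ x y) z = ω x (θ y z))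
    (hleib : ∀ x y z, ⁅θ x y, z⁆ = θ ⁅x, z⁆ y + θ x ⁅y, z⁆) (a b c d : L) :
    ω (θ ⁅a, b⁆ c) d + ω (θ ⁅a, c⁆ d) b + ω (θ ⁅a, d⁆ b) c = 0 := by
  have cyclic := form_apply_cyclic hskew hassoc
  have invariant : ω (θ ⁅b, a⁆ c) d + ω (θ b ⁅c, a⁆) d = ω (θ b c) ⁅a, d⁆ := by
    rw [← hinv, hleib, map_add, LinearMap.add_apply]
  rw [cyclic b ⁅c, a⁆ d, ← cyclic ⁅a, d⁆ b c, ← lie_skew b a, ← lie_skew c a] at invariant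
  simp only [map_neg, LinearMap.neg_apply] at invariant
  linear_combination -invariant

theorem form_apply_lie_pair_swap (h2 : IsRegular (2 : R))
    (hinv : ∀ a b c, ω ⁅a, b⁆ c = ω a ⁅b, c⁆)
    (hskew : ∀ x y, θ x y = -θ y x) (hassoc : ∀ x y z, ω (θ x y) z = ω x (θ y z))
    (hleib : ∀ x y z, ⁅θ x y, z⁆ = θ ⁅x, z⁆ y + θ x ⁅y, z⁆) (a b c d : L) :
    ω (θ ⁅a, b⁆ c) d = ω (θ ⁅c, d⁆ a) b := by
  let T (a b c d : L) : R := ω (θ ⁅a, b⁆ c) d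
  have skew_left (a b c d : L) : T a b c d = -T b a c d := by
    simp only [T, ← lie_skew a b, map_neg, LinearMap.neg_apply]
  have skew_right (a b c d : L) : T a b c d = -T a b d c :=
    form_apply_swap_right hskew hassoc ⁅a, b⁆ c d
  have two_nsmul_eq : 2 • T a b c d = 2 • T c d a b :=
    two_nsmul_pair_swap_of_bianchi skew_left skew_right
      (form_apply_lie_bianchi hinv hskew hassoc hleib) a b c d
  exact h2.left (by simpa only [nsmul_eq_mul, Nat.cast_ofNat] using two_nsmul_eq)

theorem lie_apply_eq_apply_lie (h2 : IsRegular (2 : R)) (hnondeg : ω.SeparatingLeft)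
    (hinv : ∀ a b c, ω ⁅a, b⁆ c = ω a ⁅b, c⁆)
    (hskew : ∀ x y, θ x y = -θ y x) (hassoc : ∀ x y z, ω (θ x y) z = ω x (θ y z))
    (hleib : ∀ x y z, ⁅θ x y, z⁆ = θ ⁅x, z⁆ y + θ x ⁅y, z⁆) (z w x : L) :
    ⁅θ z w, x⁆ = θ ⁅z, w⁆ x := by
  refine sub_eq_zero.mp (hnondeg _ fun y ↦ ?_)
  rw [map_sub, LinearMap.sub_apply, sub_eq_zero]
  calc ω ⁅θ z w, x⁆ y = ω (θ z w) ⁅x, y⁆ := hinv ..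
    _ = ω (θ ⁅x, y⁆ z) w := (form_apply_cyclic hskew hassoc ..).symm
    _ = ω (θ ⁅z, w⁆ x) y := form_apply_lie_pair_swap h2 hinv hskew hassoc hleib ..

theorem ad_injective_of_perfect (hperf : Submodule.span R {w : L | ∃ x y : L, w = ⁅x, y⁆} = ⊤)
    (hnondeg : ω.SeparatingLeft) (hinv : ∀ a b c, ω ⁅a, b⁆ c = ω a ⁅b, c⁆) :
    Function.Injective (LieAlgebra.ad R L) := by
  refine (injective_iff_map_eq_zero _).mpr fun z had ↦ hnondeg z ?_
  refine LinearMap.congr_fun (g := 0) (LinearMap.ext_on hperf ?_)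
  rintro _ ⟨x, y, rfl⟩
  have hzx : ⁅z, x⁆ = 0 := LinearMap.congr_fun had x
  rw [← hinv, hzx, map_zero, LinearMap.zero_apply, LinearMap.zero_apply]

end InvariantForm

theorem exists_centrum_map_of_lie_apply_eq_apply_lie {R L : Type*} [CommRing R] [LieRing L]
    [LieAlgebra R L] (hperf : Submodule.span R {w : L | ∃ x y : L, w = ⁅x, y⁆} = ⊤)
    (had : Function.Injective (LieAlgebra.ad R L)) {θ : L →ₗ[R] L →ₗ[R] L}
    (hskew : ∀ x y, θ x y = -θ y x) (hlie : ∀ z w x, ⁅θ z w, x⁆ = θ ⁅z, w⁆ x) :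
    ∃ ν : L →ₗ[R] L, ∀ x y : L,
      θ x y = ν ⁅x, y⁆ ∧ ν ⁅x, y⁆ = ⁅ν x, y⁆ ∧ ν ⁅x, y⁆ = ⁅x, ν y⁆ := by
  let ad : L →ₗ[R] Module.End R L := LieAlgebra.ad R L
  have inner (u : L) : θ u ∈ LinearMap.range ad := by
    suffices ⊤ ≤ (LinearMap.range ad).comap θ from this Submodule.mem_top
    rw [← hperf, Submodule.span_le]
    rintro _ ⟨z, w, rfl⟩
    exact ⟨θ z w, LinearMap.ext (hlie z w)⟩
  let ν : L →ₗ[R] L := θ.codRestrictOfInjective ad had inner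
  have ν_lie (x y : L) : ⁅ν x, y⁆ = θ x y :=
    LinearMap.congr_fun (θ.codRestrictOfInjective_comp_apply ad had inner x) y
  have lie_ν (x y : L) : ⁅x, ν y⁆ = θ x y := by
    rw [← lie_skew, ν_lie, hskew x y]
  have ν_apply_lie (x y : L) : ν ⁅x, y⁆ = θ x y :=
    had <| LinearMap.ext fun z ↦ (ν_lie ⁅x, y⁆ z).trans (hlie x y z).symm
  exact ⟨ν, fun x y ↦ ⟨(ν_apply_lie x y).symm, (ν_apply_lie x y).trans (ν_lie x y).symm,
    (ν_apply_lie x y).trans (lie_ν x y).symm⟩⟩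

theorem statement13_general {R L : Type*} [CommRing R] [LieRing L] [LieAlgebra R L]
    (h2 : IsRegular (2 : R))
    (hperf : Submodule.span R {w : L | ∃ x y : L, w = ⁅x, y⁆} = ⊤)
    (ω : LinearMap.BilinForm R L)
    (hnondeg : ω.SeparatingLeft)
    (hinv : ∀ a b c, ω ⁅a, b⁆ c = ω a ⁅b, c⁆)
    (θ : L →ₗ[R] L →ₗ[R] L)
    (hskew : ∀ x y, θ x y = -θ y x)
    (hassoc : ∀ x y z, ω (θ x y) z = ω x (θ y z))
    (hleib : ∀ x y z, ⁅θ x y, z⁆ = θ ⁅x, z⁆ y + θ x ⁅y, z⁆) :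
    ∃ ν : L →ₗ[R] L, ∀ x y : L,
      θ x y = ν ⁅x, y⁆ ∧ ν ⁅x, y⁆ = ⁅ν x, y⁆ ∧ ν ⁅x, y⁆ = ⁅x, ν y⁆ :=
  exists_centrum_map_of_lie_apply_eq_apply_lie hperf
    (ad_injective_of_perfect hperf hnondeg hinv) hskew
    (lie_apply_eq_apply_lie h2 hnondeg hinv hskew hassoc hleib)

/-- Corollary 4: let `g` be a perfect finite-dimensional Lie algebra
over a field of characteristic ≠ 2 with trivial center, `ω` a nondegenerate
symmetric invariant bilinear form, and `θ` bilinear satisfying (i)–(iii). Then there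
is a centrum map `ν ∈ Cent(g)` with `θ(x,y) = ν([x,y]) = [ν(x),y] = [x,ν(y)]`. -/
theorem statement13 {F L : Type*} [Field F] [LieRing L] [LieAlgebra F L]
    [FiniteDimensional F L]
    (h2 : (2 : F) ≠ 0)
    (hperf : Submodule.span F {w : L | ∃ x y : L, w = ⁅x, y⁆} = ⊤)
    (hZ : ∀ x : L, (∀ y : L, ⁅x, y⁆ = 0) → x = 0)
    (ω : L →ₗ[F] L →ₗ[F] F)
    (hsymm : ∀ x y : L, ω x y = ω y x)
    (hnondeg : ∀ x : L, (∀ y : L, ω x y = 0) → x = 0)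
    (hinv : ∀ a b c : L, ω ⁅a, b⁆ c = ω a ⁅b, c⁆)
    (θ : L →ₗ[F] L →ₗ[F] L)
    (hskew : ∀ x y : L, θ x y = -θ y x)
    (hassoc : ∀ x y z : L, ω (θ x y) z = ω x (θ y z))
    (hleib : ∀ x y z : L, ⁅θ x y, z⁆ = θ ⁅x, z⁆ y + θ x ⁅y, z⁆) :
    ∃ ν : L →ₗ[F] L, ∀ x y : L,
      θ x y = ν ⁅x, y⁆ ∧ ν ⁅x, y⁆ = ⁅ν x, y⁆ ∧ ν ⁅x, y⁆ = ⁅x, ν y⁆ :=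
  statement13_general (IsRegular.of_ne_zero h2) hperf ω hnondeg hinv θ hskew hassoc hleib
end

section
/- Let (g,ω) be a quadratic Lie algebra over a field F of characteristic different from 2, let R : g → g be a linear map skew-adjoint with respect to ω, and define θ(x,y) = [R(x),R(y)] − R([R(x),y] + [x,R(y)]). Then the following two conditions are equivalent: (a) [θ(x,y),z] + [θ(y,z),x] + [θ(z,x),y] = 0 for all x,y,z ∈ g; (b) [θ(x,y),z] = θ([x,z],y) + θ(x,[y,z]) for all x,y,z ∈ g. (By the paper's Propositions 2 and 3, condition (a) is precisely the condition for the pair (g,δ_r), with r the skew-symmetric tensor corresponding to R via ω, to be a Lie bialgebra.) -/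
/-!
Paired with `ω`, both conditions become statements about `T(x, y, z) = ω(θ(x, y), z)`, and each of
them says that `T` is invariant under the adjoint action. For the cyclic identity this is because
skew-adjointness of `R` makes `T` invariant under cyclic permutations of its arguments.
-/

open LinearMap (BilinForm)

/-- The failure `θ` of `R` to solve the classical Yang–Baxter equation in operator form. -/
def yangBaxterDefect {L : Type*} [LieRing L] (R : L → L) (x y : L) : L :=
  ⁅R x, R y⁆ - R (⁅R x, y⁆ + ⁅x, R y⁆)

/-- Invariance of a (usually trilinear) map `T` under the adjoint action. The acting element `w` is
placed on the right of the brackets; for trilinear `T` this only changes the overall sign. -/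
def IsAdInvariant {L V : Type*} [LieRing L] [AddCommGroup V] (T : L → L → L → V) : Prop :=
  ∀ x y z w : L, T ⁅x, w⁆ y z + T x ⁅y, w⁆ z + T x y ⁅z, w⁆ = 0

section InvariantForm

variable {K L : Type*} [CommRing K] [LieRing L] [LieAlgebra K L] {ω : BilinForm K L}

lemma lieInvariant_iff_apply_lie_left :
    ω.lieInvariant L ↔ ∀ a b c : L, ω ⁅a, b⁆ c = ω a ⁅b, c⁆ := by
  refine ⟨fun h a b c ↦ ?_, fun h a b c ↦ ?_⟩
  · rw [← lie_skew, map_neg, LinearMap.neg_apply, h, neg_neg]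
  · rw [← lie_skew, map_neg, LinearMap.neg_apply, h]

lemma apply_lie_cyclic (hsymm : ω.IsSymm) (hinv : ω.lieInvariant L) (a b c : L) :
    ω ⁅a, b⁆ c = ω ⁅b, c⁆ a := by
  rw [lieInvariant_iff_apply_lie_left.mp hinv, hsymm.eq]

lemma apply_yangBaxterDefect {R : L → L} (hR : ω.IsSkewAdjoint R) (x y z : L) :
    ω (yangBaxterDefect R x y) z = ω ⁅R x, R y⁆ z + ω ⁅R x, y⁆ (R z) + ω ⁅x, R y⁆ (R z) := by
  rw [yangBaxterDefect, map_sub, LinearMap.sub_apply, hR, Pi.neg_apply, map_neg, sub_neg_eq_add,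
    map_add, LinearMap.add_apply, add_assoc]

lemma apply_yangBaxterDefect_cyclic (hsymm : ω.IsSymm) (hinv : ω.lieInvariant L) {R : L → L}
    (hR : ω.IsSkewAdjoint R) (x y z : L) :
    ω (yangBaxterDefect R x y) z = ω (yangBaxterDefect R y z) x := by
  rw [apply_yangBaxterDefect hR, apply_yangBaxterDefect hR,
    apply_lie_cyclic hsymm hinv (R x) (R y) z, apply_lie_cyclic hsymm hinv (R x) y (R z),
    apply_lie_cyclic hsymm hinv x (R y) (R z)]
  ring

theorem derivation_identity_iff_isAdInvariant (hsep : ω.SeparatingLeft) (hinv : ω.lieInvariant L)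
    (θ : L → L → L) :
    (∀ x y z : L, ⁅θ x y, z⁆ = θ ⁅x, z⁆ y + θ x ⁅y, z⁆) ↔
      IsAdInvariant fun x y z ↦ ω (θ x y) z := by
  have pairing (x y z w : L) :
      ω (θ ⁅x, w⁆ y + θ x ⁅y, w⁆ - ⁅θ x y, w⁆) z =
        ω (θ ⁅x, w⁆ y) z + ω (θ x ⁅y, w⁆) z + ω (θ x y) ⁅z, w⁆ := by
    rw [map_sub, map_add, LinearMap.sub_apply, LinearMap.add_apply,
      lieInvariant_iff_apply_lie_left.mp hinv, ← lie_skew w z, map_neg, sub_neg_eq_add]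
  refine ⟨fun h x y z w ↦ ?_, fun h x y w ↦ ?_⟩
  · rw [← pairing, h, sub_self, map_zero, LinearMap.zero_apply]
  · exact (sub_eq_zero.mp (hsep _ fun z ↦ (pairing x y z w).trans (h x y z w))).symm

theorem cyclic_identity_iff_isAdInvariant (hsep : ω.SeparatingLeft) (hinv : ω.lieInvariant L)
    {θ : L → L → L} (hθ : ∀ x y z : L, ω (θ x y) z = ω (θ y z) x) :
    (∀ x y z : L, ⁅θ x y, z⁆ + ⁅θ y z, x⁆ + ⁅θ z x, y⁆ = 0) ↔
      IsAdInvariant fun x y z ↦ ω (θ x y) z := by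
  have pairing (x y z w : L) :
      ω (⁅θ x y, z⁆ + ⁅θ y z, x⁆ + ⁅θ z x, y⁆) w =
        ω (θ ⁅x, w⁆ y) z + ω (θ x ⁅y, w⁆) z + ω (θ x y) ⁅z, w⁆ := by
    simp only [map_add, LinearMap.add_apply, lieInvariant_iff_apply_lie_left.mp hinv]
    rw [hθ ⁅x, w⁆ y z, ← hθ z x ⁅y, w⁆]
    ring
  refine ⟨fun h x y z w ↦ ?_, fun h x y z ↦ hsep _ fun w ↦ ?_⟩
  · rw [← pairing, h, map_zero, LinearMap.zero_apply]
  · exact (pairing x y z w).trans (h x y z w)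

theorem statement15_general (hsymm : ω.IsSymm) (hsep : ω.SeparatingLeft)
    (hinv : ω.lieInvariant L) {R : L → L} (hR : ω.IsSkewAdjoint R) :
    let θ := yangBaxterDefect R
    (∀ x y z : L, ⁅θ x y, z⁆ + ⁅θ y z, x⁆ + ⁅θ z x, y⁆ = 0) ↔
      (∀ x y z : L, ⁅θ x y, z⁆ = θ ⁅x, z⁆ y + θ x ⁅y, z⁆) :=
  (cyclic_identity_iff_isAdInvariant hsep hinv
    (apply_yangBaxterDefect_cyclic hsymm hinv hR)).trans
    (derivation_identity_iff_isAdInvariant hsep hinv _).symm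

end InvariantForm

/-- Proposition 5: on a quadratic Lie algebra `(g,ω)` over a field of
characteristic ≠ 2, with `R` skew-adjoint with respect to `ω` and
`θ(x,y) = [R x, R y] − R([R x, y] + [x, R y])`, the cyclic condition
`[θ(x,y),z] + [θ(y,z),x] + [θ(z,x),y] = 0` holds for all `x,y,z` iff
`[θ(x,y),z] = θ([x,z],y) + θ(x,[y,z])` holds for all `x,y,z`. -/
theorem statement15 {F L : Type*} [Field F] [LieRing L] [LieAlgebra F L]
    (h2 : (2 : F) ≠ 0)
    (ω : L →ₗ[F] L →ₗ[F] F)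
    (hsymm : ∀ x y : L, ω x y = ω y x)
    (hnondeg : ∀ x : L, (∀ y : L, ω x y = 0) → x = 0)
    (hinv : ∀ a b c : L, ω ⁅a, b⁆ c = ω a ⁅b, c⁆)
    (R : L →ₗ[F] L)
    (hskewadj : ∀ x y : L, ω (R x) y = -ω x (R y)) :
    let θ : L → L → L := fun x y => ⁅R x, R y⁆ - R (⁅R x, y⁆ + ⁅x, R y⁆)
    (∀ x y z : L, ⁅θ x y, z⁆ + ⁅θ y z, x⁆ + ⁅θ z x, y⁆ = 0) ↔
    (∀ x y z : L, ⁅θ x y, z⁆ = θ ⁅x, z⁆ y + θ x ⁅y, z⁆) := by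
  exact statement15_general ⟨hsymm⟩ hnondeg (lieInvariant_iff_apply_lie_left.mpr hinv)
    fun x y ↦ (hskewadj x y).trans (map_neg (ω x) (R y)).symm
end

section
/- Let (g,ω) be a quadratic Lie algebra over a field F of characteristic different from 2, let R : g → g be a linear map skew-adjoint with respect to ω, and let μ ∈ Cent(g) be self-adjoint with respect to ω (i.e. ω(μ(x),y) = ω(x,μ(y)) for all x,y). Suppose that [R(x),R(y)] − R([R(x),y] + [x,R(y)]) = −μ(μ([x,y])) for all x,y ∈ g. Then the linear map B = (1/2)(R − μ) is a Rota–Baxter operator of weight μ on g, and B satisfies ω(B(x),y) + ω(x,B(y)) + ω(μ(x),y) = 0 for all x,y ∈ g (i.e. B + B* + μ = 0). -/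
/-! Substituting `R = 2B + μ`, bracket by bracket, turns the modified Yang–Baxter defect of `R` into
four times the Rota–Baxter defect of `B`, because `μ` can be pulled out of every bracket. The same
substitution turns `ω(R x, y) + ω(x, R y)` into twice `ω(B x, y) + ω(x, B y) + ω(μ x, y)`. -/

section Lie

variable {𝕜 L : Type*} [CommRing 𝕜] [LieRing L] [LieAlgebra 𝕜 L]

/-- Rota–Baxter operators whose weight is a linear map `μ`; a scalar weight `c` is `μ = c • id`. -/
def IsRotaBaxterOperator (B μ : L →ₗ[𝕜] L) : Prop :=
  ∀ x y : L, ⁅B x, B y⁆ = B (⁅B x, y⁆ + ⁅x, B y⁆ + μ ⁅x, y⁆)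

/-- Solutions `R` of the modified classical Yang–Baxter equation with right-hand side `-μ²`. -/
def IsModifiedYangBaxterOperator (R μ : L →ₗ[𝕜] L) : Prop :=
  ∀ x y : L, ⁅R x, R y⁆ - R (⁅R x, y⁆ + ⁅x, R y⁆) = -μ (μ ⁅x, y⁆)

-- Centrum maps are encoded as endomorphisms of the adjoint module, which fixes only the right slot
-- of the bracket.
lemma centrumMap_lie_left (μ : L →ₗ⁅𝕜,L⁆ L) (x y : L) : μ ⁅x, y⁆ = ⁅μ x, y⁆ := by
  rw [← lie_skew, map_neg, LieModuleHom.map_lie, lie_skew]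

lemma yangBaxter_defect_eq_four_smul_rotaBaxter_defect (μ : L →ₗ⁅𝕜,L⁆ L) {R B : L →ₗ[𝕜] L}
    (hR : ∀ x, R x = (2 : 𝕜) • B x + μ x) (x y : L) :
    ⁅R x, R y⁆ - R (⁅R x, y⁆ + ⁅x, R y⁆) + μ (μ ⁅x, y⁆) =
      (4 : 𝕜) • (⁅B x, B y⁆ - B (⁅B x, y⁆ + ⁅x, B y⁆ + μ ⁅x, y⁆)) := by
  have lie_add_lie_eq : ⁅R x, y⁆ + ⁅x, R y⁆ = (2 : 𝕜) • (⁅B x, y⁆ + ⁅x, B y⁆ + μ ⁅x, y⁆) := by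
    simp only [hR, add_lie, lie_add, smul_lie, lie_smul, ← centrumMap_lie_left,
      ← LieModuleHom.map_lie]
    module
  have lie_map_map_eq : ⁅R x, R y⁆ =
      (4 : 𝕜) • ⁅B x, B y⁆ + (2 : 𝕜) • μ (⁅B x, y⁆ + ⁅x, B y⁆) + μ (μ ⁅x, y⁆) := by
    simp only [hR, add_lie, lie_add, smul_lie, lie_smul, map_add, map_smul, ← centrumMap_lie_left,
      ← LieModuleHom.map_lie]
    module
  rw [lie_add_lie_eq, lie_map_map_eq, map_smul, hR]
  simp only [map_add]
  module

theorem isModifiedYangBaxterOperator_iff_isRotaBaxterOperator [Invertible (2 : 𝕜)]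
    (μ : L →ₗ⁅𝕜,L⁆ L) {R B : L →ₗ[𝕜] L} (hR : ∀ x, R x = (2 : 𝕜) • B x + μ x) :
    IsModifiedYangBaxterOperator R μ ↔ IsRotaBaxterOperator B μ := by
  have four_isUnit : IsUnit (4 : 𝕜) := by
    rw [show (4 : 𝕜) = 2 ^ 2 by norm_num]
    exact (isUnit_of_invertible 2).pow 2
  refine forall₂_congr fun x y => ?_
  rw [← sub_eq_zero (a := ⁅B x, B y⁆), ← four_isUnit.smul_eq_zero, eq_neg_iff_add_eq_zero]
  exact (yangBaxter_defect_eq_four_smul_rotaBaxter_defect μ hR x y).congr_left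

end Lie

section Form

variable {𝕜 M N : Type*} [CommRing 𝕜] [AddCommGroup M] [Module 𝕜 M] [AddCommGroup N] [Module 𝕜 N]
  {ω : M →ₗ[𝕜] M →ₗ[𝕜] N} {R B μ : M →ₗ[𝕜] M}

lemma apply_add_apply_eq_two_smul_of_selfAdjoint (hμ : ∀ x y, ω (μ x) y = ω x (μ y))
    (hR : ∀ x, R x = (2 : 𝕜) • B x + μ x) (x y : M) :
    ω (R x) y + ω x (R y) = (2 : 𝕜) • (ω (B x) y + ω x (B y) + ω (μ x) y) := by
  simp only [hR, map_add, map_smul, LinearMap.add_apply, LinearMap.smul_apply, ← hμ]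
  module

theorem skewAdjoint_iff_add_adjoint_add_eq_zero [Invertible (2 : 𝕜)]
    (hμ : ∀ x y, ω (μ x) y = ω x (μ y)) (hR : ∀ x, R x = (2 : 𝕜) • B x + μ x) :
    (∀ x y, ω (R x) y = -ω x (R y)) ↔ ∀ x y, ω (B x) y + ω x (B y) + ω (μ x) y = 0 := by
  refine forall₂_congr fun x y => ?_
  rw [eq_neg_iff_add_eq_zero, apply_add_apply_eq_two_smul_of_selfAdjoint hμ hR,
    (isUnit_of_invertible (2 : 𝕜)).smul_eq_zero]

end Form

theorem statement17_general {𝕜 L N : Type*} [CommRing 𝕜] [Invertible (2 : 𝕜)]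
    [LieRing L] [LieAlgebra 𝕜 L] [AddCommGroup N] [Module 𝕜 N]
    (ω : L →ₗ[𝕜] L →ₗ[𝕜] N) (R : L →ₗ[𝕜] L) (μ : L →ₗ⁅𝕜,L⁆ L)
    (hselfadj : ∀ x y : L, ω (μ x) y = ω x (μ y)) :
    let B : L →ₗ[𝕜] L := ⅟(2 : 𝕜) • (R - μ)
    (IsModifiedYangBaxterOperator R μ ↔ IsRotaBaxterOperator B μ) ∧
    ((∀ x y : L, ω (R x) y = -ω x (R y)) ↔
      ∀ x y : L, ω (B x) y + ω x (B y) + ω (μ x) y = 0) := by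
  intro B
  have hR (x : L) : R x = (2 : 𝕜) • B x + μ x := by simp [B]
  exact ⟨isModifiedYangBaxterOperator_iff_isRotaBaxterOperator μ hR,
    skewAdjoint_iff_add_adjoint_add_eq_zero (μ := (μ : L →ₗ[𝕜] L)) hselfadj hR⟩

/-- on a quadratic Lie algebra `(g,ω)` over a field of characteristic
≠ 2, let `R` be skew-adjoint, `μ ∈ Cent(g)` self-adjoint, and suppose
`[R x, R y] − R([R x, y] + [x, R y]) = −μ²([x,y])` for all `x,y`. Then
`B = ½(R − μ)` is a Rota–Baxter operator of weight `μ` and satisfies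
`B + B* + μ = 0`, i.e. `ω(B x, y) + ω(x, B y) + ω(μ x, y) = 0`. -/
theorem statement17 {F L : Type*} [Field F] [LieRing L] [LieAlgebra F L]
    (h2 : (2 : F) ≠ 0)
    (ω : L →ₗ[F] L →ₗ[F] F)
    (hsymm : ∀ x y : L, ω x y = ω y x)
    (hnondeg : ∀ x : L, (∀ y : L, ω x y = 0) → x = 0)
    (hinv : ∀ a b c : L, ω ⁅a, b⁆ c = ω a ⁅b, c⁆)
    (R μ : L →ₗ[F] L)
    (hskewadj : ∀ x y : L, ω (R x) y = -ω x (R y))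
    (hcent : ∀ x y : L, μ ⁅x, y⁆ = ⁅μ x, y⁆ ∧ μ ⁅x, y⁆ = ⁅x, μ y⁆)
    (hselfadj : ∀ x y : L, ω (μ x) y = ω x (μ y))
    (hmcybe : ∀ x y : L,
      ⁅R x, R y⁆ - R (⁅R x, y⁆ + ⁅x, R y⁆) = -μ (μ ⁅x, y⁆)) :
    let B : L →ₗ[F] L := (2 : F)⁻¹ • (R - μ)
    (∀ x y : L, ⁅B x, B y⁆ = B (⁅B x, y⁆ + ⁅x, B y⁆ + μ ⁅x, y⁆)) ∧
    (∀ x y : L, ω (B x) y + ω x (B y) + ω (μ x) y = 0) := by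
  let : Invertible (2 : F) := invertibleOfNonzero h2
  exact (statement17_general ω R { μ with map_lie' := (hcent _ _).2 } hselfadj).imp
    (·.mp hmcybe) (·.mp hskewadj)
end

section
/- Let g be a finite-dimensional simple Lie algebra over the real numbers ℝ, and suppose that g is not absolutely simple, i.e. there exists a centrum map of g that is not a real scalar multiple of the identity. Then every centrum map ν ∈ Cent(g) has a square root in Cent(g): there exists μ ∈ Cent(g) such that μ∘μ = ν. (This is the key step in the paper's Proposition 7 (originally due to Chloup), showing via Theorem 3 that every Lie bialgebra structure on such g is either triangular or factorizable; it rests on the fact that Cent(g) is a field, being a finite field extension of ℝ, hence isomorphic to ℂ.) -/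
/-!
The centrum maps of a simple Lie algebra `L` are the endomorphisms of its adjoint representation, so
by Schur's lemma the nonzero ones are invertible. They commute because
`f (g ⁅x, y⁆) = ⁅f x, g y⁆ = g (f ⁅x, y⁆)`, so that `f * g - g * f` kills every bracket and is not
injective, `L` being non-abelian. Hence `Cent(L)` is a field, algebraic over `ℝ` when `L` is
finite-dimensional, so it is `ℝ` or `ℂ`; a non-scalar centrum map excludes `ℝ`, and in `ℂ` every
element is a square. The pair `ℝ ⊂ ℂ` enters only as a field with an algebraically closed quadratic
extension.
-/

section Schur

variable {R L M N : Type*} [CommRing R] [LieRing L]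
  [AddCommGroup M] [Module R M] [LieRingModule L M]
  [AddCommGroup N] [Module R N] [LieRingModule L N]

lemma lieModuleHom_injective_of_ne_zero [LieModule.IsIrreducible R L M] {f : M →ₗ⁅R,L⁆ N}
    (hf : f ≠ 0) : Function.Injective f := by
  refine f.ker_eq_bot.1 ((eq_bot_or_eq_top f.ker).resolve_right fun h ↦ hf ?_)
  ext x
  exact f.mem_ker.1 (h ▸ LieSubmodule.mem_top x)

lemma lieModuleHom_surjective_of_ne_zero [LieModule.IsIrreducible R L N] {f : M →ₗ⁅R,L⁆ N}
    (hf : f ≠ 0) : Function.Surjective f := by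
  refine f.range_eq_top.1 ((eq_bot_or_eq_top f.range).resolve_left fun h ↦ hf ?_)
  ext x
  exact (LieSubmodule.mem_bot (f x)).1 (h ▸ (f.mem_range (f x)).2 ⟨x, rfl⟩)

end Schur

/-- The centroid of a Lie algebra `L`, written `Cent(L)` in the paper, as a subalgebra of `End(L)`.
It is encoded as the commutant of the adjoint representation; `mem_lieCentroid_iff_forall_and` is
the definition of the paper. -/
def lieCentroid (R L : Type*) [CommRing R] [LieRing L] [LieAlgebra R L] :
    Subalgebra R (Module.End R L) :=
  Subalgebra.centralizer R (Set.range (LieAlgebra.ad R L))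

section Centroid

variable {R L : Type*} [CommRing R] [LieRing L] [LieAlgebra R L] {f g : Module.End R L}

lemma mem_lieCentroid_iff : f ∈ lieCentroid R L ↔ ∀ x y : L, f ⁅x, y⁆ = ⁅x, f y⁆ := by
  simp only [lieCentroid, Subalgebra.mem_centralizer_iff, Set.forall_mem_range, LinearMap.ext_iff,
    Module.End.mul_apply, LieAlgebra.ad_apply, eq_comm]

namespace lieCentroid

lemma apply_lie_right (hf : f ∈ lieCentroid R L) (x y : L) : f ⁅x, y⁆ = ⁅x, f y⁆ :=
  mem_lieCentroid_iff.1 hf x y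

lemma apply_lie_left (hf : f ∈ lieCentroid R L) (x y : L) : f ⁅x, y⁆ = ⁅f x, y⁆ := by
  rw [← lie_skew, map_neg, apply_lie_right hf, lie_skew]

lemma apply_apply_lie_comm (hf : f ∈ lieCentroid R L) (hg : g ∈ lieCentroid R L) (x y : L) :
    f (g ⁅x, y⁆) = g (f ⁅x, y⁆) :=
  calc
    f (g ⁅x, y⁆) = ⁅f x, g y⁆ := by rw [apply_lie_right hg, apply_lie_left hf]
    _ = g (f ⁅x, y⁆) := by rw [apply_lie_left hf, apply_lie_right hg]

end lieCentroid

lemma mem_lieCentroid_iff_forall_and :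
    f ∈ lieCentroid R L ↔ ∀ x y : L, f ⁅x, y⁆ = ⁅f x, y⁆ ∧ f ⁅x, y⁆ = ⁅x, f y⁆ :=
  ⟨fun hf x y ↦ ⟨lieCentroid.apply_lie_left hf x y, lieCentroid.apply_lie_right hf x y⟩,
    fun h ↦ mem_lieCentroid_iff.2 fun x y ↦ (h x y).2⟩

namespace lieCentroid

variable [LieAlgebra.IsSimple R L]

lemma bijective_of_ne_zero (hf : f ∈ lieCentroid R L) (hf₀ : f ≠ 0) : Function.Bijective f := by
  let φ : L →ₗ⁅R,L⁆ L := { f with map_lie' := apply_lie_right hf _ _ }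
  have hφ : φ ≠ 0 := fun h ↦ hf₀ (congrArg LieModuleHom.toLinearMap h)
  exact ⟨lieModuleHom_injective_of_ne_zero hφ, lieModuleHom_surjective_of_ne_zero hφ⟩

lemma commute (hf : f ∈ lieCentroid R L) (hg : g ∈ lieCentroid R L) : Commute f g := by
  by_contra hfg
  have hinj : Function.Injective (f * g - g * f) :=
    (bijective_of_ne_zero (sub_mem (mul_mem hf hg) (mul_mem hg hf)) (sub_ne_zero.2 hfg)).1
  refine LieAlgebra.IsSimple.non_abelian R (L := L) ⟨fun x y ↦ hinj ?_⟩
  rw [map_zero, LinearMap.sub_apply, Module.End.mul_apply, Module.End.mul_apply,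
    apply_apply_lie_comm hf hg, sub_self]

variable (R L) in
lemma isField : IsField (lieCentroid R L) where
  exists_pair_ne :=
    have := LieAlgebra.IsSimple.nontrivial R L
    ⟨0, 1, fun h ↦ zero_ne_one (congrArg Subtype.val h : (0 : Module.End R L) = 1)⟩
  mul_comm f g := Subtype.ext (commute f.2 g.2)
  mul_inv_cancel := by
    rintro ⟨f, hf⟩ hf₀
    obtain ⟨u, rfl⟩ : IsUnit f :=
      (Module.End.isUnit_iff f).2 (bijective_of_ne_zero hf fun h ↦ hf₀ (Subtype.ext h))
    have hu_inv : (↑u⁻¹ : Module.End R L) ∈ lieCentroid R L := fun a ha ↦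
      Commute.units_inv_right (hf a ha)
    exact ⟨⟨↑u⁻¹, hu_inv⟩, Subtype.ext u.mul_inv⟩

end lieCentroid

end Centroid

lemma isSquare_of_not_surjective_of_finrank_eq_two {K K' F : Type*} [Field K] [Field K']
    [Algebra K K'] [IsAlgClosed K'] (hK : Module.finrank K K' = 2) [Field F] [Algebra K F]
    [Algebra.IsAlgebraic K F] (hF : ¬Function.Surjective (algebraMap K F)) (a : F) :
    IsSquare a := by
  rcases IsAlgClosed.nonempty_algEquiv_or_of_finrank_eq_two F hK with ⟨⟨e⟩⟩ | ⟨⟨e⟩⟩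
  · exact absurd (fun b ↦ ⟨e b, by simpa using (e.symm.commutes (e b)).symm⟩) hF
  · have h_sq : IsSquare (e a) := IsAlgClosed.exists_eq_mul_self (e a)
    simpa using h_sq.map e.symm

theorem statement19_general {K K' L : Type*} [Field K] [Field K'] [Algebra K K'] [IsAlgClosed K']
    (hK : Module.finrank K K' = 2) [LieRing L] [LieAlgebra K L] [LieAlgebra.IsSimple K L]
    [Algebra.IsAlgebraic K (lieCentroid K L)]
    (hns : ∃ μ₀ ∈ lieCentroid K L, ∀ c : K, μ₀ ≠ c • LinearMap.id) :
    ∀ ν ∈ lieCentroid K L, ∃ μ ∈ lieCentroid K L, μ ∘ₗ μ = ν := by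
  intro ν hν
  obtain ⟨μ₀, hμ₀, hns⟩ := hns
  let _ : Field (lieCentroid K L) := (lieCentroid.isField K L).toField
  have not_surjective : ¬Function.Surjective (algebraMap K (lieCentroid K L)) := fun h ↦ by
    obtain ⟨c, hc⟩ := h ⟨μ₀, hμ₀⟩
    exact hns c (congrArg Subtype.val hc).symm
  obtain ⟨μ, hμ⟩ := isSquare_of_not_surjective_of_finrank_eq_two hK not_surjective ⟨ν, hν⟩
  exact ⟨μ, μ.2, (congrArg Subtype.val hμ).symm⟩

/-- let `g` be a finite-dimensional simple real Lie algebra that is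
not absolutely simple (there is a centrum map that is not a real scalar multiple of
the identity). Then every centrum map `ν ∈ Cent(g)` has a square root in `Cent(g)`. -/
theorem statement19 {L : Type*} [LieRing L] [LieAlgebra ℝ L]
    [FiniteDimensional ℝ L] [LieAlgebra.IsSimple ℝ L]
    (hns : ∃ μ₀ : L →ₗ[ℝ] L,
      (∀ x y : L, μ₀ ⁅x, y⁆ = ⁅μ₀ x, y⁆ ∧ μ₀ ⁅x, y⁆ = ⁅x, μ₀ y⁆) ∧
      ∀ c : ℝ, μ₀ ≠ c • (LinearMap.id : L →ₗ[ℝ] L)) :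
    ∀ ν : L →ₗ[ℝ] L, (∀ x y : L, ν ⁅x, y⁆ = ⁅ν x, y⁆ ∧ ν ⁅x, y⁆ = ⁅x, ν y⁆) →
      ∃ μ : L →ₗ[ℝ] L,
        (∀ x y : L, μ ⁅x, y⁆ = ⁅μ x, y⁆ ∧ μ ⁅x, y⁆ = ⁅x, μ y⁆) ∧ μ ∘ₗ μ = ν := by
  simp only [← mem_lieCentroid_iff_forall_and] at hns ⊢
  exact statement19_general Complex.finrank_real_complex hns
end
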